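/- For every nonzero polynomial F ∈ ℂ_p[X₁^{±1},…,X_n^{±1}] there exists κ > 0 with the following property: if ζ ∈ G_m^n(ℂ_p) has finite order and δ(ζ) is sufficiently large in terms of F, then F(σ(ζ)) ≠ 0 for all σ ∈ Gal(ℚ(ζ)/ℚ), and (1/[ℚ(ζ):ℚ])·Σ_{σ∈Gal(ℚ(ζ)/ℚ)} log|F(σ(ζ))|_p = log|F|_p + O(δ(ζ)^{-κ}) as δ(ζ) → ∞, with implicit constant depending only on n and F. -/

import Mathlib

/-- The `p`-adic Gauss norm of a multivariate polynomial. -/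
noncomputable def mvGaussNorm {K : Type*} [NontriviallyNormedField K] {n : ℕ}
    (F : MvPolynomial (Fin n) K) : ℝ :=
  ((F.support.sup fun d => ‖F.coeff d‖₊ : NNReal) : ℝ)

/-- `δ(ζ)`: the minimum of the maximum norm `|a|` over nonzero `a ∈ ℤ^n` with
`ζ^a = 1`. -/
noncomputable def deltaNat {K : Type*} [Field K] {n : ℕ} (ζ : Fin n → Kˣ) : ℕ :=
  sInf {m : ℕ | ∃ a : Fin n → ℤ, a ≠ 0 ∧ (∏ i, ζ i ^ a i = 1) ∧
    m = Finset.univ.sup fun i => (a i).natAbs}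

/-!
If `ζ i = χ (e i)` for an injective character `χ` of `ZMod N`, then `F(σ(ζ))` is, up to the
coefficient of largest norm, an exponential sum `V(σ) = ∑ i, a i * χ (b i * σ)`, and `δ(ζ)` bounds
from below the orders of the differences of the frequencies `b i`.

*Non-vanishing.* A linear form in roots of unity is bounded away from zero unless two of the roots
differ by a root of unity of bounded order. Every root of unity is the product of one of `p`-power
order and a Teichmüller representative. For integer coefficients, Witt vectors turn the smallness
of a sum of Teichmüller representatives into polynomial equations, so by noetherianity only
finitely many norms occur; Cramer's rule reduces arbitrary coefficients to integer forms. A small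
value thus forces an exact linear relation, to which Mann's argument applies.

*Mean value.* By Dirichlet's theorem there is `u ≠ 0` such that every `u * b i` has a small lift
`x i`. Along a line `σ + u * k` the sum `V` is, up to a unit, a polynomial of low degree evaluated
at `N`-th roots of unity. The product of `x - y` over roots of unity `x ≠ y` is controlled by `N`,
so such averages are close to the logarithm of the Gauss norm, which is at least the norm of any
partial sum of `V` over the `i` with equal `x i`. Those `i` form a proper subset of the support,
so induction applies, and the total error is a power of `N` because `N / φ(N)` grows slower than
any power.
-/

section RationalRelations

variable {K ι : Type*} [Field K] {s : Finset ι}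

lemma exists_prime_mul_eq_of_not_dvd {M N : ℕ} (h : ¬ N ∣ M) :
    ∃ q n, q.Prime ∧ N = q * n ∧ M.gcd N ∣ n := by
  obtain ⟨t, ht⟩ := Nat.gcd_dvd_right M N
  have ht1 : t ≠ 1 := by
    rintro rfl
    exact h (by rw [ht, mul_one]; exact Nat.gcd_dvd_left M _)
  obtain ⟨q, hq, t', rfl⟩ := Nat.exists_prime_and_dvd ht1
  exact ⟨q, M.gcd N * t', hq, by rw [mul_left_comm, ← ht], dvd_mul_right _ _⟩

lemma exists_forall_coprime_one_add_mul {q n : ℕ} (hq : q.Prime) (hqn : ¬ q ∣ n) :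
    ∃ j₀ < q, ∀ j < q, j ≠ j₀ → (1 + j * n).Coprime (q * n) := by
  have := Fact.mk hq
  have hn : (n : ZMod q) ≠ 0 := by rwa [Ne, ZMod.natCast_eq_zero_iff]
  refine ⟨(-(n : ZMod q)⁻¹).val, ZMod.val_lt _, fun j hj hne => ?_⟩
  refine Nat.Coprime.mul_right ?_ (by simp)
  rw [Nat.coprime_comm, hq.coprime_iff_not_dvd, ← ZMod.natCast_eq_zero_iff]
  intro h0
  push_cast at h0
  have hj' : (j : ZMod q) = -(n : ZMod q)⁻¹ := by
    linear_combination (n : ZMod q)⁻¹ * h0 - j * mul_inv_cancel₀ hn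
  exact hne (by rw [← hj', ZMod.val_natCast_of_lt hj])

lemma sum_ratCast_mul_pow_eq_zero [CharZero K] [IsAlgClosed K] {c : ι → ℚ} {η : ι → K}
    {N a : ℕ} (hN : N ≠ 0) (ha : a.Coprime N)
    (hη : ∀ k ∈ s, η k ^ N = 1) (h : ∑ k ∈ s, (c k : K) * η k = 0) :
    ∑ k ∈ s, (c k : K) * η k ^ a = 0 := by
  have : NeZero N := ⟨hN⟩
  obtain ⟨ω, hω⟩ := HasEnoughRootsOfUnity.exists_primitiveRoot K N
  choose! u hu using fun k hk => hω.eq_pow_of_pow_eq_one (hη k hk)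
  set P : Polynomial ℚ := ∑ k ∈ s, Polynomial.C (c k) * Polynomial.X ^ u k with hP
  have aeval_P : ∀ x : K, Polynomial.aeval x P = ∑ k ∈ s, (c k : K) * x ^ u k := fun x => by
    simp [hP]
  have aeval_ω : Polynomial.aeval ω P = 0 := by
    rw [aeval_P, ← h]
    exact Finset.sum_congr rfl fun k hk => by rw [(hu k hk).2]
  have hminpoly : minpoly ℚ (ω ^ a) = minpoly ℚ ω := by
    rw [← Polynomial.cyclotomic_eq_minpoly_rat hω hN.bot_lt,
      ← Polynomial.cyclotomic_eq_minpoly_rat (hω.pow_of_coprime a ha) hN.bot_lt]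
  have aeval_ω_pow : Polynomial.aeval (ω ^ a) P = 0 := by
    rwa [← minpoly.dvd_iff, hminpoly, minpoly.dvd_iff]
  rw [← aeval_ω_pow, aeval_P]
  exact Finset.sum_congr rfl fun k hk => by rw [← (hu k hk).2, pow_right_comm]

variable [DecidableEq K]

lemma geom_sum_eq_ite_of_pow_eq_one {q : ℕ} {x : K} (hx : x ^ q = 1) :
    ∑ j ∈ Finset.range q, x ^ j = if x = 1 then (q : K) else 0 := by
  split_ifs with h
  · simp [h]
  · rw [geom_sum_eq h, hx, sub_self, zero_div]

lemma sum_range_sum_mul_pow {q : ℕ} {a x : ι → K} (hx : ∀ k ∈ s, x k ^ q = 1) :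
    ∑ j ∈ Finset.range q, ∑ k ∈ s, a k * x k ^ j = q * ∑ k ∈ s with x k = 1, a k := by
  rw [Finset.sum_comm, Finset.sum_filter, Finset.mul_sum]
  refine Finset.sum_congr rfl fun k hk => ?_
  rw [← Finset.mul_sum, geom_sum_eq_ite_of_pow_eq_one (hx k hk)]
  split_ifs <;> ring

omit [DecidableEq K] in
lemma sum_mul_pow_eq_zero_of_card_lt [IsAlgClosed K] {q : ℕ} [NeZero (q : K)] {a x : ι → K}
    (hs : s.card < q) (hx : ∀ k ∈ s, x k ^ q = 1) {j₀ : ℕ} (hj₀ : j₀ < q)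
    (h : ∀ j < q, j ≠ j₀ → ∑ k ∈ s, a k * x k ^ j = 0) :
    ∑ k ∈ s, a k * x k ^ j₀ = 0 := by
  classical
  obtain ⟨y, hy, hys⟩ : ∃ y ∈ Polynomial.nthRootsFinset q (1 : K), y ∉ s.image x := by
    obtain ⟨ω, hω⟩ := HasEnoughRootsOfUnity.exists_primitiveRoot K q
    refine Finset.exists_mem_notMem_of_card_lt_card ?_
    exact (Finset.card_image_le.trans_lt hs).trans_eq hω.card_nthRootsFinset.symm
  have hyq : y ^ q = 1 := (Polynomial.mem_nthRootsFinset (by omega) 1).1 hy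
  have hy0 : y ≠ 0 := by rintro rfl; simp [zero_pow (by omega : q ≠ 0)] at hyq
  have hempty : ({k ∈ s | x k / y = 1} : Finset ι) = ∅ :=
    Finset.filter_eq_empty_iff.2 fun k hk hk1 =>
      hys (Finset.mem_image.2 ⟨k, hk, (div_eq_one_iff_eq hy0).1 hk1⟩)
  have hdiv : ∀ j, ∑ k ∈ s, a k * (x k / y) ^ j = (∑ k ∈ s, a k * x k ^ j) / y ^ j := fun j => by
    simp only [Finset.sum_div, div_pow, mul_div_assoc]
  have key := sum_range_sum_mul_pow (s := s) (a := a) (x := fun k => x k / y) (q := q)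
    fun k hk => by rw [div_pow, hx k hk, hyq, div_one]
  rw [hempty, Finset.sum_empty, mul_zero, Finset.sum_eq_single_of_mem j₀ (Finset.mem_range.2 hj₀)
    fun j hj hne => by rw [hdiv, h j (Finset.mem_range.1 hj) hne, zero_div], hdiv] at key
  exact (div_eq_zero_iff.1 key).resolve_right (pow_ne_zero _ hy0)

variable [CharZero K] [IsAlgClosed K] {c : ι → ℚ} {η : ι → K}

lemma sum_filter_pow_eq_one_eq_zero {q n : ℕ} (hq : q.Prime) (hn : n ≠ 0)
    (hqn : q ∣ n ∨ s.card < q) (hη : ∀ k ∈ s, η k ^ (q * n) = 1)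
    (h : ∑ k ∈ s, (c k : K) * η k = 0) :
    ∑ k ∈ s with η k ^ n = 1, (c k : K) * η k = 0 := by
  have hηq : ∀ k ∈ s, (η k ^ n) ^ q = 1 := fun k hk => by rw [← pow_mul', hη k hk]
  have hcop : ∀ j, (1 + j * n).Coprime (q * n) →
      ∑ k ∈ s, (c k : K) * η k * (η k ^ n) ^ j = 0 := fun j hj => by
    rw [← sum_ratCast_mul_pow_eq_zero (mul_ne_zero hq.ne_zero hn) hj hη h]
    exact Finset.sum_congr rfl fun k _ => by ring
  have hall : ∀ j < q, ∑ k ∈ s, (c k : K) * η k * (η k ^ n) ^ j = 0 := by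
    by_cases hqn' : q ∣ n
    · intro j _
      have hjn : (1 + j * n).Coprime n := by simp
      exact hcop j ((hjn.coprime_dvd_right hqn').mul_right hjn)
    · have : NeZero q := ⟨hq.ne_zero⟩
      obtain ⟨j₀, hj₀, hj⟩ := exists_forall_coprime_one_add_mul hq hqn'
      have hj₀0 := sum_mul_pow_eq_zero_of_card_lt (hqn.resolve_left hqn') hηq hj₀
        fun j hjq hne => hcop j (hj j hjq hne)
      intro j hjq
      by_cases hne : j = j₀
      · rwa [hne]
      · exact hcop j (hj j hjq hne)
  have key := sum_range_sum_mul_pow (a := fun k => (c k : K) * η k) hηq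
  rw [Finset.sum_eq_zero fun j hj => hall j (Finset.mem_range.1 hj)] at key
  exact (mul_eq_zero.1 key.symm).resolve_left (Nat.cast_ne_zero.2 hq.ne_zero)

lemma sum_filter_pow_factorial_eq_one_eq_zero {m N : ℕ} (hN : N ≠ 0) (hs : s.card ≤ m)
    (hη : ∀ k ∈ s, η k ^ N = 1) (h : ∑ k ∈ s, (c k : K) * η k = 0) :
    ∑ k ∈ s with η k ^ m.factorial = 1, (c k : K) * η k = 0 := by
  induction N using Nat.strong_induction_on generalizing s with
  | _ N ih =>
  by_cases hdvd : N ∣ m.factorial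
  · rwa [Finset.filter_true_of_mem fun k hk =>
      orderOf_dvd_iff_pow_eq_one.1 ((orderOf_dvd_of_pow_eq_one (hη k hk)).trans hdvd)]
  obtain ⟨q, n, hq, rfl, hgcd⟩ := exists_prime_mul_eq_of_not_dvd hdvd
  have hn : n ≠ 0 := right_ne_zero_of_mul hN
  have hqn : q ∣ n ∨ s.card < q := by
    by_contra! hcon
    have hqm : q ∣ m.factorial := hq.dvd_factorial.2 (hcon.2.trans hs)
    exact hcon.1 ((Nat.dvd_gcd hqm (dvd_mul_right q n)).trans hgcd)
  have hstep := ih n (lt_mul_of_one_lt_left hn.bot_lt hq.one_lt) hn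
    ((Finset.card_filter_le _ _).trans hs) (fun k hk => (Finset.mem_filter.1 hk).2)
    (sum_filter_pow_eq_one_eq_zero hq hn hqn hη h)
  rw [Finset.filter_filter] at hstep
  rw [← hstep]
  refine Finset.sum_congr (Finset.filter_congr fun k hk => ?_) fun _ _ => rfl
  refine ⟨fun h1 => ⟨?_, h1⟩, And.right⟩
  have hpow_gcd : η k ^ m.factorial.gcd (q * n) = 1 := pow_gcd_eq_one.2 ⟨h1, hη k hk⟩
  exact orderOf_dvd_iff_pow_eq_one.1 ((orderOf_dvd_of_pow_eq_one hpow_gcd).trans hgcd)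

lemma sum_filter_pow_factorial_eq_zero {m : ℕ} (hs : s.card ≤ m)
    (hη : ∀ k ∈ s, IsOfFinOrder (η k)) (h : ∑ k ∈ s, (c k : K) * η k = 0) {k₀ : ι} (hk₀ : k₀ ∈ s) :
    ∑ k ∈ s with η k ^ m.factorial = η k₀ ^ m.factorial, (c k : K) * η k = 0 := by
  have h0 : η k₀ ≠ 0 := (hη k₀ hk₀).isUnit.ne_zero
  set N := ∏ k ∈ s, orderOf (η k)
  have hN : N ≠ 0 := Finset.prod_ne_zero_iff.2 fun k hk => (hη k hk).orderOf_pos.ne'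
  have hηN : ∀ k ∈ s, η k ^ N = 1 := fun k hk =>
    orderOf_dvd_iff_pow_eq_one.1 (Finset.dvd_prod_of_mem _ hk)
  have sum_div : ∀ t : Finset ι,
      ∑ k ∈ t, (c k : K) * (η k / η k₀) = (∑ k ∈ t, (c k : K) * η k) / η k₀ := fun t => by
    simp only [Finset.sum_div, mul_div_assoc]
  have key := sum_filter_pow_factorial_eq_one_eq_zero (η := fun k => η k / η k₀) hN hs
    (fun k hk => by rw [div_pow, hηN k hk, hηN k₀ hk₀, div_one])
    (by rw [sum_div, h, zero_div])
  rw [sum_div] at key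
  simpa only [div_pow, div_eq_one_iff_eq (pow_ne_zero _ h0), div_eq_zero_iff, h0, or_false]
    using key

omit [DecidableEq K] in
lemma sum_filter_eq_zero_of_pow_factorial_injOn {α : Type*} [DecidableEq α] {π : ι → α} {m : ℕ}
    (hs : s.card ≤ m) (hη : ∀ k ∈ s, IsOfFinOrder (η k))
    (hπ : ∀ k ∈ s, ∀ l ∈ s, η k ^ m.factorial = η l ^ m.factorial → π k = π l)
    (h : ∑ k ∈ s, (c k : K) * η k = 0) (i : α) :
    ∑ k ∈ s with π k = i, (c k : K) * η k = 0 := by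
  classical
  rw [← Finset.sum_fiberwise_of_maps_to (s := s.filter (π · = i)) fun k hk =>
    Finset.mem_image_of_mem (fun k => η k ^ m.factorial) hk]
  refine Finset.sum_eq_zero fun v hv => ?_
  obtain ⟨k₀, hk₀, rfl⟩ := Finset.mem_image.1 hv
  obtain ⟨hk₀s, rfl⟩ := Finset.mem_filter.1 hk₀
  rw [← sum_filter_pow_factorial_eq_zero hs hη h hk₀s, Finset.filter_filter]
  refine Finset.sum_congr (Finset.filter_congr fun k hk => ?_) fun _ _ => rfl
  exact ⟨And.right, fun hk' => ⟨hπ k hk k₀ hk₀s hk', hk'⟩⟩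

end RationalRelations

section ManinMumford

variable {K ι : Type*} [Field K] [CharZero K]

/-- The subfield `ℚ(μ_∞)` of `K` generated by all roots of unity. -/
def cyclotomicSubfield (K : Type*) [Field K] [CharZero K] : IntermediateField ℚ K :=
  IntermediateField.adjoin ℚ (CommMonoid.torsion K : Set K)

lemma mem_cyclotomicSubfield_iff_mem_span {x : K} :
    x ∈ cyclotomicSubfield K ↔ x ∈ Submodule.span ℚ (CommMonoid.torsion K : Set K) := by
  have halg : ∀ y ∈ (CommMonoid.torsion K : Set K), IsAlgebraic ℚ y := fun y hy => by
    obtain ⟨n, hn, hyn⟩ := isOfFinOrder_iff_pow_eq_one.1 hy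
    exact (IsIntegral.of_pow hn (hyn ▸ isIntegral_one)).isAlgebraic
  rw [cyclotomicSubfield, ← IntermediateField.mem_toSubalgebra,
    IntermediateField.adjoin_toSubalgebra_of_isAlgebraic halg, ← Subalgebra.mem_toSubmodule,
    Algebra.adjoin_eq_span, Submonoid.closure_eq]

lemma mem_cyclotomicSubfield_of_isOfFinOrder {x : K} (hx : IsOfFinOrder x) :
    x ∈ cyclotomicSubfield K :=
  IntermediateField.subset_adjoin ℚ _ hx

variable [IsAlgClosed K] [Fintype ι] {b : ι → K} {i₁ : ι}

lemma exists_pow_eq_pow_of_mem_cyclotomicSubfield (hb : ∀ i, b i ∈ cyclotomicSubfield K)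
    (hb₁ : b i₁ ≠ 0) :
    ∃ B : ℕ, 0 < B ∧ ∀ ζ : ι → K, (∀ i, IsOfFinOrder (ζ i)) → ∑ i, b i * ζ i = 0 →
      ∃ i j, i ≠ j ∧ ζ i ^ B = ζ j ^ B := by
  classical
  choose c hc hcsum using fun i =>
    Submodule.mem_span_set.1 (mem_cyclotomicSubfield_iff_mem_span.1 (hb i))
  set s : Finset (Σ _ : ι, K) := Finset.univ.sigma fun i => (c i).support with hs
  have hsω : ∀ k ∈ s, IsOfFinOrder k.2 := fun k hk => hc k.1 (Finset.mem_sigma.1 hk).2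
  set W := ∏ k ∈ s, orderOf k.2
  have hW : 0 < W := Finset.prod_pos fun k hk => (hsω k hk).orderOf_pos
  have hsW : ∀ k ∈ s, k.2 ^ W = 1 := fun k hk =>
    orderOf_dvd_iff_pow_eq_one.1 (Finset.dvd_prod_of_mem _ hk)
  refine ⟨s.card.factorial * W, Nat.mul_pos s.card.factorial_pos hW, fun ζ hζ hsum => ?_⟩
  by_contra! hdistinct
  have fibre_sum : ∀ i, ∑ w ∈ (c i).support, (c i w : K) * (w * ζ i) = b i * ζ i := fun i => by
    rw [← hcsum i, Finsupp.sum, Finset.sum_mul]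
    exact Finset.sum_congr rfl fun w _ => by rw [Rat.smul_def, mul_assoc]
  have total_sum : ∑ k ∈ s, (c k.1 k.2 : K) * (k.2 * ζ k.1) = 0 := by
    simp only [hs, Finset.sum_sigma, fibre_sum, hsum]
  have pow_pow : ∀ k ∈ s, ((k.2 * ζ k.1) ^ s.card.factorial) ^ W =
      ζ k.1 ^ (s.card.factorial * W) := fun k hk => by
    rw [← pow_mul, mul_pow, pow_mul', hsW k hk, one_pow, one_mul]
  have hinj : ∀ k ∈ s, ∀ l ∈ s, (k.2 * ζ k.1) ^ s.card.factorial =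
      (l.2 * ζ l.1) ^ s.card.factorial → k.1 = l.1 := by
    intro k hk l hl h
    by_contra hne
    refine hdistinct _ _ hne ?_
    rw [← pow_pow k hk, h, pow_pow l hl]
  have vanishing := sum_filter_eq_zero_of_pow_factorial_injOn (π := Sigma.fst) le_rfl
    (fun k hk => (hsω k hk).mul (hζ k.1)) hinj total_sum i₁
  simp only [Finset.sum_filter, hs, Finset.sum_sigma, Finset.sum_ite_irrel, fibre_sum,
    Finset.sum_const_zero, Finset.sum_ite_eq', Finset.mem_univ, if_true] at vanishing
  exact mul_ne_zero hb₁ (hζ i₁).isUnit.ne_zero vanishing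

lemma exists_pow_eq_pow_of_sum_mul_eq_zero (hb₁ : b i₁ ≠ 0) :
    ∃ B : ℕ, 0 < B ∧ ∀ ζ : ι → K, (∀ i, IsOfFinOrder (ζ i)) → ∑ i, b i * ζ i = 0 →
      ∃ i j, i ≠ j ∧ ζ i ^ B = ζ j ^ B := by
  obtain ⟨f, hf⟩ : ∃ f : K →ₗ[cyclotomicSubfield K] cyclotomicSubfield K, f (b i₁) ≠ 0 := by
    by_contra! hcon
    exact hb₁ ((Module.forall_dual_apply_eq_zero_iff _ (b i₁)).1 hcon)
  obtain ⟨B, hB, h⟩ := exists_pow_eq_pow_of_mem_cyclotomicSubfield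
    (b := fun i => (f (b i) : K)) (fun i => (f (b i)).2) (Subtype.coe_ne_coe.2 hf)
  refine ⟨B, hB, fun ζ hζ hsum => h ζ hζ ?_⟩
  have hfζ : ∀ i, f (b i) * ζ i = (f (b i * ζ i) : K) := fun i => by
    have := f.map_smul ⟨ζ i, mem_cyclotomicSubfield_of_isOfFinOrder (hζ i)⟩ (b i)
    rw [mul_comm, mul_comm (b i)]
    exact (congrArg Subtype.val this).symm
  simp only [hfζ, ← AddSubmonoidClass.coe_finsetSum, ← map_sum, hsum, map_zero,
    ZeroMemClass.coe_zero]

end ManinMumford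

lemma norm_finsetSum_lt_of_forall_lt {E ι : Type*} [SeminormedAddCommGroup E]
    [IsUltrametricDist E] {s : Finset ι} {f : ι → E} {C : ℝ} (hC : 0 < C)
    (hf : ∀ i ∈ s, ‖f i‖ < C) : ‖∑ i ∈ s, f i‖ < C := by
  rcases s.eq_empty_or_nonempty with rfl | hs
  · simpa using hC
  · obtain ⟨i, hi, hle⟩ := IsUltrametricDist.exists_norm_finsetSum_le_of_nonempty hs f
    exact hle.trans_lt (hf i hi)

lemma norm_eq_of_norm_sub_lt_right {E : Type*} [SeminormedAddCommGroup E] [IsUltrametricDist E]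
    {x y : E} (h : ‖x - y‖ < ‖y‖) : ‖x‖ = ‖y‖ := by
  rw [← norm_neg y]
  refine IsUltrametricDist.norm_eq_of_add_norm_lt_max ?_
  rw [← sub_eq_add_neg, norm_neg]
  exact h.trans_le (le_max_right _ _)

section WittExpansion

variable {K ι : Type*} [NormedField K]

lemma exists_forall_mem_span_image_Iio {R : Type*} [CommRing R] [IsNoetherianRing R]
    (f : ℕ → R) : ∃ N : ℕ, ∀ j, f j ∈ Ideal.span (f '' Set.Iio N) := by
  let I : ℕ →o Ideal R :=
    ⟨fun n => Ideal.span (f '' Set.Iio n), fun _ _ hab =>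
      Ideal.span_mono (Set.image_mono (Set.Iio_subset_Iio hab))⟩
  obtain ⟨N, hN⟩ := monotone_stabilizes_iff_noetherian.2 ‹IsNoetherianRing R› I
  refine ⟨N, fun j => ?_⟩
  have hj : f j ∈ I (max N (j + 1)) := Ideal.subset_span ⟨j, by simp, rfl⟩
  rwa [← hN _ (le_max_left _ _)] at hj

lemma norm_le_one_of_pow_eq_self {q : ℕ} (hq : 1 < q) {x : K} (hx : x ^ q = x) : ‖x‖ ≤ 1 := by
  by_contra! hlt
  have := lt_self_pow₀ hlt hq
  rw [← norm_pow, hx] at this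
  exact this.false

lemma exists_intCast_mul_X_pow_sum_eq [Fintype ι] (p : ℕ) [Fact p.Prime] (c : ι → ℤ) :
    ∃ f : ℕ → MvPolynomial ι ℤ, ∀ n,
      ∑ i, (c i : MvPolynomial ι ℤ) * MvPolynomial.X i ^ p ^ n =
        ∑ j ∈ Finset.range (n + 1), (p : MvPolynomial ι ℤ) ^ j * f j ^ p ^ (n - j) := by
  let w : WittVector p (MvPolynomial ι ℤ) :=
    ∑ i, (c i : WittVector p (MvPolynomial ι ℤ)) * WittVector.teichmuller p (MvPolynomial.X i)
  have ghost_w : ∀ n, WittVector.ghostComponent n w =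
      ∑ i, (c i : MvPolynomial ι ℤ) * MvPolynomial.X i ^ p ^ n := fun n => by
    simp only [w, map_sum, map_mul, map_intCast, WittVector.ghostComponent_teichmuller]
  refine ⟨w.coeff, fun n => ?_⟩
  rw [← ghost_w, WittVector.ghostComponent_apply, aeval_wittPolynomial]

variable [IsUltrametricDist K]

lemma norm_aeval_int_le_one {x : ι → K} (hx : ∀ i, ‖x i‖ ≤ 1) (g : MvPolynomial ι ℤ) :
    ‖MvPolynomial.aeval x g‖ ≤ 1 := by
  induction g using MvPolynomial.induction_on with
  | C a => simpa using IsUltrametricDist.norm_intCast_le_one K a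
  | add f g hf hg =>
    rw [map_add]
    exact (IsUltrametricDist.norm_add_le_max _ _).trans (max_le hf hg)
  | mul_X f i hf =>
    rw [map_mul, norm_mul, MvPolynomial.aeval_X]
    exact mul_le_one₀ hf (norm_nonneg _) (hx i)

lemma norm_aeval_int_lt_one_of_mem_span {x : ι → K} (hx : ∀ i, ‖x i‖ ≤ 1)
    {S : Set (MvPolynomial ι ℤ)} (hS : ∀ g ∈ S, ‖MvPolynomial.aeval x g‖ < 1)
    {g : MvPolynomial ι ℤ} (hg : g ∈ Ideal.span S) : ‖MvPolynomial.aeval x g‖ < 1 := by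
  induction hg using Submodule.span_induction with
  | mem g hg => exact hS g hg
  | zero => simp
  | add f g _ _ hf hg =>
    rw [map_add]
    exact (IsUltrametricDist.norm_add_le_max _ _).trans_lt (max_lt hf hg)
  | smul a g _ hg =>
    rw [smul_eq_mul, map_mul, norm_mul]
    exact (mul_le_of_le_one_left (norm_nonneg _) (norm_aeval_int_le_one hx a)).trans_lt hg

section

variable {p : ℕ} {F : ℕ → K} {s : K}

lemma exists_norm_sub_pow_mul_pow_lt (hp : 1 < p) (hp0 : (p : K) ≠ 0) (hpK : ‖(p : K)‖ < 1)
    (hF : ∀ j, ‖F j‖ ≤ 1)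
    (hs : ∃ᶠ n in Filter.atTop, s = ∑ j ∈ Finset.range (n + 1), (p : K) ^ j * F j ^ p ^ (n - j))
    {J : ℕ} (hJ : ∀ j < J, ‖F j‖ < 1) :
    ∃ k : ℕ, ‖s - (p : K) ^ J * F J ^ k‖ < ‖(p : K)‖ ^ J := by
  have hpos : 0 < ‖(p : K)‖ := norm_pos_iff.2 hp0
  have eventually_small : ∀ᶠ n in Filter.atTop, ∀ j ∈ Finset.range J,
      ‖F j‖ ^ p ^ (n - j) < ‖(p : K)‖ ^ J := by
    refine (Filter.eventually_all_finset _).2 fun j hj => ?_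
    have hexp : Filter.Tendsto (fun n => p ^ (n - j)) Filter.atTop Filter.atTop :=
      (tendsto_pow_atTop_atTop_of_one_lt hp).comp (Filter.tendsto_sub_atTop_nat j)
    have := (tendsto_pow_atTop_nhds_zero_of_lt_one (norm_nonneg _)
      (hJ j (Finset.mem_range.1 hj))).comp hexp
    exact this.eventually_lt_const (pow_pos hpos J)
  obtain ⟨n, hsn, hsmall, hJn⟩ :=
    (hs.and_eventually (eventually_small.and (Filter.eventually_ge_atTop J))).exists
  refine ⟨p ^ (n - J), ?_⟩
  rw [hsn, ← Finset.sum_erase_eq_sub (Finset.mem_range.2 (by omega))]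
  refine norm_finsetSum_lt_of_forall_lt (pow_pos hpos J) fun j hj => ?_
  rw [norm_mul, norm_pow, norm_pow]
  rcases lt_or_gt_of_ne (Finset.mem_erase.1 hj).1 with hlt | hgt
  · exact (mul_le_of_le_one_left (by positivity) (pow_le_one₀ hpos.le hpK.le)).trans_lt
      (hsmall j (Finset.mem_range.2 hlt))
  · exact (mul_le_of_le_one_right (by positivity) (pow_le_one₀ (norm_nonneg _) (hF j))).trans_lt
      (pow_lt_pow_right_of_lt_one₀ hpos hpK hgt)

lemma eq_zero_or_norm_eq_pow_of_frequently_eq_sum (hp : 1 < p) (hp0 : (p : K) ≠ 0)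
    (hpK : ‖(p : K)‖ < 1) (hF : ∀ j, ‖F j‖ ≤ 1)
    (hs : ∃ᶠ n in Filter.atTop, s = ∑ j ∈ Finset.range (n + 1), (p : K) ^ j * F j ^ p ^ (n - j)) :
    s = 0 ∨ ∃ J, (∀ j < J, ‖F j‖ < 1) ∧ ‖F J‖ = 1 ∧ ‖s‖ = ‖(p : K)‖ ^ J := by
  classical
  by_cases hex : ∃ j, ‖F j‖ = 1
  · refine Or.inr ⟨Nat.find hex, ?_⟩
    have hJ : ∀ j < Nat.find hex, ‖F j‖ < 1 := fun j hj =>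
      (hF j).lt_of_ne (Nat.find_min hex hj)
    refine ⟨hJ, Nat.find_spec hex, ?_⟩
    obtain ⟨k, hk⟩ := exists_norm_sub_pow_mul_pow_lt hp hp0 hpK hF hs hJ
    have hmain : ‖(p : K) ^ Nat.find hex * F (Nat.find hex) ^ k‖ = ‖(p : K)‖ ^ Nat.find hex := by
      rw [norm_mul, norm_pow, norm_pow, Nat.find_spec hex, one_pow, mul_one]
    rw [← hmain] at hk ⊢
    exact norm_eq_of_norm_sub_lt_right hk
  · push Not at hex
    have hlt : ∀ j, ‖F j‖ < 1 := fun j => (hF j).lt_of_ne (hex j)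
    have norm_le : ∀ J, ‖s‖ ≤ ‖(p : K)‖ ^ J := fun J => by
      obtain ⟨k, hk⟩ := exists_norm_sub_pow_mul_pow_lt hp hp0 hpK hF hs fun j (_ : j < J) => hlt j
      have hmain : ‖(p : K) ^ J * F J ^ k‖ ≤ ‖(p : K)‖ ^ J := by
        rw [norm_mul, norm_pow, norm_pow]
        exact mul_le_of_le_one_right (by positivity) (pow_le_one₀ (norm_nonneg _) (hF J))
      rw [← sub_add_cancel s ((p : K) ^ J * F J ^ k)]
      exact (IsUltrametricDist.norm_add_le_max _ _).trans (max_le hk.le hmain)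
    have := ge_of_tendsto' (tendsto_pow_atTop_nhds_zero_of_lt_one (norm_nonneg _) hpK) norm_le
    exact Or.inl (norm_le_zero_iff.1 this)

end

lemma exists_forall_sum_intCast_mul_eq_zero_or_norm_eq [Fintype ι] {p : ℕ} [hp : Fact p.Prime]
    (hp0 : (p : K) ≠ 0) (hpK : ‖(p : K)‖ < 1) (c : ι → ℤ) :
    ∃ N₀ : ℕ, ∀ (x : ι → K) (r : ℕ), 0 < r → (∀ i, x i ^ p ^ r = x i) →
      ∑ i, (c i : K) * x i = 0 ∨ ∃ j < N₀, ‖∑ i, (c i : K) * x i‖ = ‖(p : K)‖ ^ j := by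
  obtain ⟨f, hf⟩ := exists_intCast_mul_X_pow_sum_eq p c
  obtain ⟨N₀, hN₀⟩ := exists_forall_mem_span_image_Iio f
  refine ⟨N₀, fun x r hr hx => ?_⟩
  have hx1 : ∀ i, ‖x i‖ ≤ 1 := fun i =>
    norm_le_one_of_pow_eq_self (Nat.one_lt_pow hr.ne' hp.out.one_lt) (hx i)
  have periodic : ∀ n i, x i ^ p ^ (r * n) = x i := fun n i => by
    induction n with
    | zero => simp
    | succ n ih => rw [mul_add, mul_one, pow_add, pow_mul, ih, hx i]
  have expansion : ∀ n, ∑ i, (c i : K) * x i = ∑ j ∈ Finset.range (r * n + 1),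
      (p : K) ^ j * MvPolynomial.aeval x (f j) ^ p ^ (r * n - j) := fun n => by
    have := congrArg (MvPolynomial.aeval x) (hf (r * n))
    simpa [periodic] using this
  have hs : ∃ᶠ n in Filter.atTop, ∑ i, (c i : K) * x i = ∑ j ∈ Finset.range (n + 1),
      (p : K) ^ j * MvPolynomial.aeval x (f j) ^ p ^ (n - j) :=
    Filter.frequently_atTop.2 fun n => ⟨r * n, Nat.le_mul_of_pos_left n hr, expansion n⟩
  refine (eq_zero_or_norm_eq_pow_of_frequently_eq_sum hp.out.one_lt hp0 hpK
    (fun j => norm_aeval_int_le_one hx1 (f j)) hs).imp_right ?_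
  rintro ⟨J, hJ, hFJ, hsJ⟩
  refine ⟨J, ?_, hsJ⟩
  by_contra! hle
  refine (norm_aeval_int_lt_one_of_mem_span hx1 ?_ (hN₀ J)).ne hFJ
  rintro _ ⟨j, hj, rfl⟩
  exact hJ j (hj.trans_le hle)

end WittExpansion

section PrimePowerRoots

variable {K ι : Type*} [NormedField K] {p : ℕ}

lemma eq_of_pow_mul_mul_pow_eq {t : ℝ} (ht0 : 0 < t) (ht1 : t < 1) {d u v a b : ℕ} (ha : a < d)
    (hb : b < d) (h : t ^ (d * u) * t ^ a = t ^ (d * v) * t ^ b) : a = b := by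
  rw [← pow_add, ← pow_add] at h
  have hexp := congrArg (· % d) (pow_right_injective₀ ht0 ht1.ne h)
  simpa only [Nat.mul_add_mod, Nat.mod_eq_of_lt ha, Nat.mod_eq_of_lt hb] using hexp

lemma abs_coeff_sum_X_pow_le_one {s : Finset ι} {e : ι → ℕ} (he : Set.InjOn e s) (l : ℕ) :
    |(∑ a ∈ s, Polynomial.X ^ e a : Polynomial ℤ).coeff l| ≤ 1 := by
  have hcard : (s.filter fun a => l = e a).card ≤ 1 :=
    Finset.card_le_one.2 fun a ha b hb => by
      rw [Finset.mem_filter] at ha hb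
      exact he ha.1 hb.1 (ha.2.symm.trans hb.2)
  simp only [Polynomial.finsetSum_coeff, Polynomial.coeff_X_pow, Finset.sum_boole, Nat.abs_cast]
  exact_mod_cast hcard

lemma exists_natDegree_lt_totient_aeval_eq_pow [hp : Fact p.Prime] {k : ℕ} {ω : K}
    (hω : IsPrimitiveRoot ω (p ^ (k + 1))) (e : ℕ) :
    ∃ R : Polynomial ℤ, R.natDegree < (p ^ (k + 1)).totient ∧ (∀ l, |R.coeff l| ≤ 1) ∧
      Polynomial.aeval ω R = ω ^ e := by
  obtain ⟨q, rfl⟩ : ∃ q, p = q + 1 := ⟨p - 1, (Nat.sub_add_cancel hp.out.one_le).symm⟩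
  have hq : 0 < q := by have := hp.out.one_lt; omega
  set h := (q + 1) ^ k
  have hh : 0 < h := pow_pos q.succ_pos k
  have htot : ((q + 1) ^ (k + 1)).totient = h * q := by
    rw [Nat.totient_prime_pow_succ hp.out, Nat.add_sub_cancel]
  set e' := e % (q + 1) ^ (k + 1)
  have hωe : ω ^ e = ω ^ e' := pow_eq_pow_mod e hω.pow_eq_one
  have he' : e' < (q + 1) ^ (k + 1) := Nat.mod_lt _ (pow_pos q.succ_pos _)
  rw [htot, hωe]
  by_cases hlt : e' < h * q
  · refine ⟨Polynomial.X ^ e', by rwa [Polynomial.natDegree_X_pow], fun l => ?_, by simp⟩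
    rw [Polynomial.coeff_X_pow]
    split_ifs <;> simp
  obtain ⟨t, ht⟩ := Nat.exists_eq_add_of_le (not_lt.1 hlt)
  have hth : t < h := by
    rw [ht, pow_succ, mul_add, mul_one] at he'
    exact Nat.lt_of_add_lt_add_left he'
  have hωh : IsPrimitiveRoot (ω ^ h) (q + 1) :=
    hω.pow (pow_pos q.succ_pos _) (pow_succ (q + 1) k)
  refine ⟨-∑ a ∈ Finset.range q, Polynomial.X ^ (h * a + t), ?_, fun l => ?_, ?_⟩
  · rw [Polynomial.natDegree_neg]
    refine (Polynomial.natDegree_sum_le_of_forall_le (n := h * q - 1) _ _ fun a ha => ?_).trans_lt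
      (Nat.sub_one_lt (Nat.mul_pos hh hq).ne')
    have : h * (a + 1) ≤ h * q := Nat.mul_le_mul_left h (Finset.mem_range.1 ha)
    rw [Polynomial.natDegree_X_pow]
    rw [mul_add] at this
    omega
  · rw [Polynomial.coeff_neg, abs_neg]
    refine abs_coeff_sum_X_pow_le_one (fun a _ b _ hab => ?_) l
    exact Nat.eq_of_mul_eq_mul_left hh (Nat.add_right_cancel hab)
  · have hsum := hωh.geom_sum_eq_zero hp.out.one_lt
    rw [Finset.sum_range_succ] at hsum
    rw [ht, pow_add, pow_mul, eq_neg_of_add_eq_zero_right hsum]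
    simp [pow_add, pow_mul, Finset.sum_mul]

lemma exists_mul_eq_of_pow_mul_eq_one {G : Type*} [Monoid G] {m n : ℕ} (hmn : m.Coprime n) {x : G}
    (hx : x ^ (m * n) = 1) : ∃ y z : G, y ^ m = 1 ∧ z ^ n = 1 ∧ y * z = x := by
  obtain ⟨a, ham, han⟩ := Nat.chineseRemainder hmn 1 0
  obtain ⟨b, hbm, hbn⟩ := Nat.chineseRemainder hmn 0 1
  have hab : a + b ≡ 1 [MOD m * n] := (Nat.modEq_and_modEq_iff_modEq_mul hmn).1
    ⟨by simpa using ham.add hbm, by simpa using han.add hbn⟩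
  have pow_eq_one : ∀ {c}, m * n ∣ c → x ^ c = 1 := fun hc =>
    orderOf_dvd_iff_pow_eq_one.1 ((orderOf_dvd_of_pow_eq_one hx).trans hc)
  refine ⟨x ^ a, x ^ b, ?_, ?_, ?_⟩
  · rw [← pow_mul]
    exact pow_eq_one (mul_comm m n ▸ mul_dvd_mul (Nat.modEq_zero_iff_dvd.1 han) dvd_rfl)
  · rw [← pow_mul]
    exact pow_eq_one (mul_dvd_mul (Nat.modEq_zero_iff_dvd.1 hbm) dvd_rfl)
  · rw [← pow_add, pow_eq_pow_mod _ hx, hab, ← pow_eq_pow_mod _ hx, pow_one]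

lemma exists_isPrimitiveRoot_mul_pow_eq [IsAlgClosed K] [CharZero K] [Finite ι]
    [hp : Fact p.Prime] {ζ : ι → K} (hζ : ∀ i, IsOfFinOrder (ζ i)) :
    ∃ (k r : ℕ) (ω : K) (ξ : ι → K) (e : ι → ℕ), 0 < r ∧ IsPrimitiveRoot ω (p ^ (k + 1)) ∧
      (∀ i, ξ i ^ p ^ r = ξ i) ∧ ∀ i, ζ i = ω ^ e i * ξ i := by
  have := Fintype.ofFinite ι
  set m := ∏ i, orderOf (ζ i)
  have hm : m ≠ 0 := Finset.prod_ne_zero_iff.2 fun i _ => (hζ i).orderOf_pos.ne'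
  obtain ⟨k, M, hpM, hmk⟩ := Nat.exists_eq_pow_mul_and_not_dvd hm p hp.out.ne_one
  have hcop : p.Coprime M := hp.out.coprime_iff_not_dvd.2 hpM
  have hM : 0 < M := Nat.pos_of_ne_zero fun h => hpM (h ▸ dvd_zero p)
  have hζ1 : ∀ i, ζ i ^ (p ^ (k + 1) * M) = 1 := fun i => by
    have hdvd : m ∣ p ^ (k + 1) * M := by
      rw [hmk]; exact mul_dvd_mul_right (pow_dvd_pow p k.le_succ) M
    exact orderOf_dvd_iff_pow_eq_one.1 ((Finset.dvd_prod_of_mem _ (Finset.mem_univ i)).trans hdvd)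
  have : NeZero (p ^ (k + 1)) := ⟨pow_ne_zero _ hp.out.ne_zero⟩
  obtain ⟨ω, hω⟩ := HasEnoughRootsOfUnity.exists_primitiveRoot K (p ^ (k + 1))
  choose y ξ hy hξ hyξ using fun i => exists_mul_eq_of_pow_mul_eq_one (hcop.pow_left _) (hζ1 i)
  choose e _ hωe using fun i => hω.eq_pow_of_pow_eq_one (hy i)
  refine ⟨k, M.totient, ω, ξ, e, Nat.totient_pos.2 hM, hω, fun i => ?_, fun i => ?_⟩
  · rw [pow_eq_pow_mod _ (hξ i), Nat.ModEq.pow_totient hcop, ← pow_eq_pow_mod _ (hξ i), pow_one]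
  · rw [hωe, hyξ]

variable [IsUltrametricDist K]

lemma norm_pow_sub_one_le {x : K} (hx : ‖x‖ ≤ 1) (n : ℕ) : ‖x ^ n - 1‖ ≤ ‖x - 1‖ := by
  rw [← geom_sum_mul, norm_mul]
  refine mul_le_of_le_one_left (norm_nonneg _) ?_
  refine IsUltrametricDist.norm_sum_le_of_forall_le_of_nonneg zero_le_one fun i _ => ?_
  rw [norm_pow]
  exact pow_le_one₀ (norm_nonneg _) hx

lemma norm_sub_one_eq_of_isPrimitiveRoot {n : ℕ} (hn : n ≠ 0) {ω μ : K}
    (hω : IsPrimitiveRoot ω n) (hμ : IsPrimitiveRoot μ n) : ‖μ - 1‖ = ‖ω - 1‖ := by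
  have : NeZero n := ⟨hn⟩
  obtain ⟨i, -, rfl⟩ := hω.eq_pow_of_pow_eq_one hμ.pow_eq_one
  obtain ⟨j, -, hj⟩ := hμ.eq_pow_of_pow_eq_one hω.pow_eq_one
  refine le_antisymm (norm_pow_sub_one_le (hω.isOfFinOrder hn).norm_eq_one.le i) ?_
  conv_lhs => rw [← hj]
  exact norm_pow_sub_one_le (hμ.isOfFinOrder hn).norm_eq_one.le j

lemma norm_sub_one_pow_totient [hp : Fact p.Prime] {k : ℕ} {ω : K}
    (hω : IsPrimitiveRoot ω (p ^ (k + 1))) :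
    ‖ω - 1‖ ^ (p ^ (k + 1)).totient = ‖(p : K)‖ := by
  have hpos : 0 < p ^ (k + 1) := pow_pos hp.out.pos _
  rw [← Polynomial.eval_one_cyclotomic_prime_pow (R := K) k,
    Polynomial.cyclotomic_eq_prod_X_sub_primitiveRoots hω, Polynomial.eval_prod, norm_prod,
    ← hω.card_primitiveRoots, ← Finset.prod_const]
  refine Finset.prod_congr rfl fun μ hμ => ?_
  rw [Polynomial.eval_sub, Polynomial.eval_X, Polynomial.eval_C, norm_sub_rev 1 μ,
    norm_sub_one_eq_of_isPrimitiveRoot hpos.ne' hω ((mem_primitiveRoots hpos).1 hμ)]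

lemma norm_taylor_coeff_le {Q : Polynomial K} {C : ℝ} (hC : 0 ≤ C) (hQ : ∀ l, ‖Q.coeff l‖ ≤ C)
    {r : K} (hr : ‖r‖ ≤ 1) (n : ℕ) : ‖(Polynomial.taylor r Q).coeff n‖ ≤ C := by
  rw [Polynomial.taylor_coeff, Polynomial.eval_eq_sum_range]
  refine IsUltrametricDist.norm_sum_le_of_forall_le_of_nonneg hC fun l _ => ?_
  rw [Polynomial.hasseDeriv_coeff, norm_mul, norm_mul, norm_pow]
  calc ‖((l + n).choose n : K)‖ * ‖Q.coeff (l + n)‖ * ‖r‖ ^ l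
      ≤ 1 * C * 1 := by
        gcongr
        exacts [IsUltrametricDist.norm_natCast_le_one K _, hQ _, pow_le_one₀ (norm_nonneg r) hr]
    _ = C := by ring

lemma norm_coeff_mul_pow_le_norm_eval {d : ℕ} {π : K} (hπ0 : π ≠ 0) (hπ1 : ‖π‖ < 1)
    {Q : Polynomial K} (hQ : Q.natDegree < d)
    (hval : ∀ l, Q.coeff l = 0 ∨ ∃ v : ℕ, ‖Q.coeff l‖ = ‖π‖ ^ (d * v)) (l : ℕ) :
    ‖Q.coeff l‖ * ‖π‖ ^ d ≤ ‖Q.eval π‖ := by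
  classical
  have hπ : 0 < ‖π‖ := norm_pos_iff.2 hπ0
  by_cases h0 : Q.coeff l = 0
  · simp [h0]
  set S := (Finset.range d).filter fun l => Q.coeff l ≠ 0
  have mem_S : ∀ {j}, j ∈ S ↔ j < d ∧ Q.coeff j ≠ 0 := by simp [S]
  have hl : l ∈ S := mem_S.2 ⟨(Polynomial.le_natDegree_of_ne_zero h0).trans_lt hQ, h0⟩
  have norm_ne : (S : Set ℕ).Pairwise fun i j => ‖Q.coeff i * π ^ i‖ ≠ ‖Q.coeff j * π ^ j‖ := by
    intro i hi j hj hij heq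
    obtain ⟨u, hu⟩ := (hval i).resolve_left (mem_S.1 hi).2
    obtain ⟨v, hv⟩ := (hval j).resolve_left (mem_S.1 hj).2
    rw [norm_mul, norm_mul, norm_pow, norm_pow, hu, hv] at heq
    exact hij (eq_of_pow_mul_mul_pow_eq hπ hπ1 (mem_S.1 hi).1 (mem_S.1 hj).1 heq)
  have heval : Q.eval π = ∑ j ∈ S, Q.coeff j * π ^ j := by
    rw [Polynomial.eval_eq_sum_range' hQ]
    refine (Finset.sum_filter_of_ne fun j _ hne => ?_).symm
    exact left_ne_zero_of_mul hne
  rw [heval, IsUltrametricDist.norm_sum_eq_sup'_of_pairwise_ne ⟨l, hl⟩ norm_ne]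
  refine le_trans ?_ (Finset.le_sup' (fun j => ‖Q.coeff j * π ^ j‖) hl)
  rw [norm_mul, norm_pow]
  refine mul_le_mul_of_nonneg_left ?_ (norm_nonneg _)
  exact pow_le_pow_of_le_one hπ.le hπ1.le (mem_S.1 hl).1.le

lemma exists_forall_sum_intCast_mul_mul_eq_zero_or_norm_eq [Fintype ι] [hp : Fact p.Prime]
    (hp0 : (p : K) ≠ 0) (hpK : ‖(p : K)‖ < 1) (c : ι → ℤ) :
    ∃ N₀ : ℕ, ∀ (d : ι → ℤ) (x : ι → K) (r : ℕ), (∀ i, |d i| ≤ 1) → 0 < r →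
      (∀ i, x i ^ p ^ r = x i) → ∑ i, ((c i * d i : ℤ) : K) * x i = 0 ∨
        ∃ j < N₀, ‖∑ i, ((c i * d i : ℤ) : K) * x i‖ = ‖(p : K)‖ ^ j := by
  classical
  choose N₀ hN₀ using fun d : ι → ℤ =>
    exists_forall_sum_intCast_mul_eq_zero_or_norm_eq hp0 hpK fun i => c i * d i
  refine ⟨(Finset.Icc (-1) 1).sup N₀, fun d x r hd hr hx => (hN₀ d x r hr hx).imp_right ?_⟩
  rintro ⟨j, hj, hsum⟩
  have hmem : d ∈ Finset.Icc (-1) 1 :=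
    Finset.mem_Icc.2 ⟨fun i => (abs_le.1 (hd i)).1, fun i => (abs_le.1 (hd i)).2⟩
  exact ⟨j, hj.trans_le (Finset.le_sup hmem), hsum⟩

lemma norm_coeff_mul_norm_le_norm_eval [hp : Fact p.Prime] (hp0 : (p : K) ≠ 0)
    (hpK : ‖(p : K)‖ < 1) {k : ℕ} {ω : K} (hω : IsPrimitiveRoot ω (p ^ (k + 1)))
    {P : Polynomial K} (hP : P.natDegree < (p ^ (k + 1)).totient)
    (hval : ∀ l, (Polynomial.taylor 1 P).coeff l = 0 ∨
      ∃ v : ℕ, ‖(Polynomial.taylor 1 P).coeff l‖ = ‖(p : K)‖ ^ v) (l : ℕ) :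
    ‖P.coeff l‖ * ‖(p : K)‖ ≤ ‖P.eval ω‖ := by
  have hπp := norm_sub_one_pow_totient hω
  have hφ : (p ^ (k + 1)).totient ≠ 0 := (Nat.zero_le _).trans_lt hP |>.ne'
  have hπ0 : ω - 1 ≠ 0 := by
    rintro h0
    rw [h0, norm_zero, zero_pow hφ, eq_comm, norm_eq_zero] at hπp
    exact hp0 hπp
  have hπ1 : ‖ω - 1‖ < 1 := by
    rw [← hπp] at hpK
    exact lt_of_pow_lt_pow_left₀ _ zero_le_one (hpK.trans_eq (one_pow _).symm)
  have heval : (Polynomial.taylor 1 P).eval (ω - 1) = P.eval ω := by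
    rw [Polynomial.taylor_eval, sub_add_cancel]
  have hQ : (Polynomial.taylor 1 P).natDegree < (p ^ (k + 1)).totient := by
    rwa [Polynomial.natDegree_taylor]
  have hPQ : Polynomial.taylor (-1) (Polynomial.taylor 1 P) = P := by
    rw [Polynomial.taylor_taylor, neg_add_cancel, Polynomial.taylor_zero]
  have hcoeff : ∀ j, ‖(Polynomial.taylor 1 P).coeff j‖ ≤ ‖P.eval ω‖ / ‖(p : K)‖ := fun j => by
    rw [le_div_iff₀ (norm_pos_iff.2 hp0), ← hπp, ← heval]
    exact norm_coeff_mul_pow_le_norm_eval hπ0 hπ1 hQ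
      (fun l => (hval l).imp_right fun ⟨v, hv⟩ => ⟨v, by rw [hv, ← hπp, pow_mul]⟩) j
  have hle := norm_taylor_coeff_le (by positivity) hcoeff (r := -1) (by rw [norm_neg, norm_one]) l
  rwa [hPQ, le_div_iff₀ (norm_pos_iff.2 hp0)] at hle

lemma norm_sum_coeff_mul_norm_le_norm_sum_aeval [Fintype ι] [hp : Fact p.Prime]
    (hp0 : (p : K) ≠ 0) (hpK : ‖(p : K)‖ < 1) {k r : ℕ} {ω : K}
    (hω : IsPrimitiveRoot ω (p ^ (k + 1))) {ξ : ι → K} (hr : 0 < r) (hξ : ∀ i, ξ i ^ p ^ r = ξ i)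
    {R : ι → Polynomial ℤ} (hR : ∀ i, (R i).natDegree < (p ^ (k + 1)).totient) (l : ℕ) :
    ‖∑ i, ((R i).coeff l : K) * ξ i‖ * ‖(p : K)‖ ≤ ‖∑ i, Polynomial.aeval ω (R i) * ξ i‖ := by
  set P : Polynomial K := ∑ i, (R i).map (Int.castRingHom K) * Polynomial.C (ξ i) with hP
  have heval : P.eval ω = ∑ i, Polynomial.aeval ω (R i) * ξ i := by
    simp [hP, Polynomial.eval_finsetSum, Polynomial.eval_map, Polynomial.aeval_def]
  have hdeg : P.natDegree < (p ^ (k + 1)).totient := by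
    refine (Polynomial.natDegree_sum_le_of_forall_le (n := (p ^ (k + 1)).totient - 1) _ _
      fun i _ => ?_).trans_lt (Nat.sub_one_lt (Nat.totient_pos.2 (pow_pos hp.out.pos _)).ne')
    refine (Polynomial.natDegree_mul_C_le _ _).trans (Polynomial.natDegree_map_le.trans ?_)
    exact Nat.le_sub_one_of_lt (hR i)
  have hcoeff : P.coeff l = ∑ i, ((R i).coeff l : K) * ξ i := by
    simp [hP, Polynomial.finsetSum_coeff]
  have htaylor : ∀ j, (Polynomial.taylor 1 P).coeff j =
      ∑ i, ((Polynomial.taylor 1 (R i)).coeff j : K) * ξ i := fun j => by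
    have hmap : ∀ i, Polynomial.taylor 1 ((R i).map (Int.castRingHom K)) =
        (Polynomial.taylor 1 (R i)).map (Int.castRingHom K) := fun i => by
      rw [Polynomial.map_taylor, map_one]
    simp only [hP, map_sum, Polynomial.taylor_mul, Polynomial.taylor_C, hmap,
      Polynomial.finsetSum_coeff, Polynomial.coeff_mul_C, Polynomial.coeff_map, eq_intCast]
  rw [← hcoeff, ← heval]
  refine norm_coeff_mul_norm_le_norm_eval hp0 hpK hω hdeg (fun j => ?_) l
  obtain ⟨_, hN⟩ := exists_forall_sum_intCast_mul_eq_zero_or_norm_eq hp0 hpK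
    fun i => (Polynomial.taylor 1 (R i)).coeff j
  rw [htaylor]
  exact (hN ξ r hr hξ).imp_right fun ⟨v, _, hv⟩ => ⟨v, hv⟩

lemma exists_forall_norm_sum_intCast_mul_lt_imp_eq_zero [IsAlgClosed K] [CharZero K] [Fintype ι]
    [hp : Fact p.Prime] (hpK : ‖(p : K)‖ < 1) (c : ι → ℤ) :
    ∃ ε > 0, ∀ ζ : ι → K, (∀ i, IsOfFinOrder (ζ i)) →
      ‖∑ i, (c i : K) * ζ i‖ < ε → ∑ i, (c i : K) * ζ i = 0 := by
  have hp0 : (p : K) ≠ 0 := Nat.cast_ne_zero.2 hp.out.ne_zero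
  obtain ⟨N₀, hN₀⟩ := exists_forall_sum_intCast_mul_mul_eq_zero_or_norm_eq hp0 hpK c
  refine ⟨‖(p : K)‖ ^ (N₀ + 1), pow_pos (norm_pos_iff.2 hp0) _, fun ζ hζ hlt => ?_⟩
  obtain ⟨k, r, ω, ξ, e, hr, hω, hξ, hζω⟩ := exists_isPrimitiveRoot_mul_pow_eq (p := p) hζ
  choose R hRdeg hRcoeff hRω using fun i => exists_natDegree_lt_totient_aeval_eq_pow hω (e i)
  have hdeg : ∀ i, (c i • R i).natDegree < (p ^ (k + 1)).totient := fun i =>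
    (Polynomial.natDegree_smul_le _ _).trans_lt (hRdeg i)
  have hsum : ∑ i, (c i : K) * ζ i = ∑ i, Polynomial.aeval ω (c i • R i) * ξ i :=
    Finset.sum_congr rfl fun i _ => by
      rw [hζω, map_zsmul, hRω, zsmul_eq_mul, mul_assoc]
  have hzero : ∀ l, ∑ i, ((c i • R i).coeff l : K) * ξ i = 0 := fun l => by
    simp only [Polynomial.coeff_smul, smul_eq_mul]
    refine (hN₀ (fun i => (R i).coeff l) ξ r (fun i => hRcoeff i l) hr hξ).resolve_right ?_
    rintro ⟨j, hj, hnorm⟩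
    have hle := norm_sum_coeff_mul_norm_le_norm_sum_aeval hp0 hpK hω hr hξ hdeg l
    simp only [Polynomial.coeff_smul, smul_eq_mul] at hle
    rw [← hsum, hnorm, ← pow_succ] at hle
    refine (hle.trans_lt hlt).not_ge (pow_le_pow_of_le_one (norm_nonneg _) hpK.le ?_)
    exact Nat.succ_le_succ hj.le
  rw [hsum]
  simp_rw [fun i => Polynomial.aeval_eq_sum_range' (hdeg i) ω, Finset.sum_mul]
  rw [Finset.sum_comm]
  refine Finset.sum_eq_zero fun l _ => ?_
  calc ∑ i, (c i • R i).coeff l • ω ^ l * ξ i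
      = ω ^ l * ∑ i, ((c i • R i).coeff l : K) * ξ i := by
        rw [Finset.mul_sum]
        exact Finset.sum_congr rfl fun i _ => by rw [zsmul_eq_mul]; ring
    _ = 0 := by rw [hzero, mul_zero]

end PrimePowerRoots

section LinearForms

variable {K ι : Type*} [Fintype ι]

lemma exists_ne_zero_forall_sum_mul_eq_zero [Field K] [DecidableEq ι] {T : Set (ι → K)}
    (hT : ∀ M : Matrix ι ι K, (∀ i, M i ∈ T) → M.det = 0) :
    ∃ b : ι → K, b ≠ 0 ∧ ∀ x ∈ T, ∑ i, b i * x i = 0 := by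
  have hspan : Submodule.span K T < ⊤ := by
    refine lt_top_iff_ne_top.2 fun htop => ?_
    obtain ⟨s, hsT, hs, hli⟩ := exists_linearIndependent K T
    let basis := Module.Basis.mk hli (by rw [Subtype.range_coe, hs, htop])
    let e : ι ≃ s := (Pi.basisFun K ι).indexEquiv basis
    have hM : LinearIndependent K (Matrix.of fun i => (e i : ι → K)).row := hli.comp e e.injective
    rw [Matrix.linearIndependent_rows_iff_isUnit, Matrix.isUnit_iff_isUnit_det] at hM
    exact hM.ne_zero (hT _ fun i => hsT (e i).2)
  obtain ⟨f, hf0, hf⟩ := Submodule.exists_le_ker_of_lt_top _ hspan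
  obtain ⟨b, rfl⟩ := (dotProductEquiv K ι).surjective f
  exact ⟨b, fun hb => hf0 (by rw [hb, map_zero]), fun x hx => hf (Submodule.subset_span hx)⟩

variable [NormedField K] [IsUltrametricDist K]

lemma norm_det_mul_lt_of_norm_mulVec_lt [DecidableEq ι] {M : Matrix ι ι K} {a : ι → K} {C : ℝ}
    (hC : 0 < C) (hM : ∀ i j, ‖M i j‖ ≤ 1) (h : ∀ i, ‖M.mulVec a i‖ < C) (j : ι) :
    ‖M.det * a j‖ < C := by
  have cramer : M.det * a j = (M.updateCol j (M.mulVec a)).det := by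
    rw [← Matrix.cramer_apply, Matrix.cramer_eq_adjugate_mulVec, Matrix.mulVec_mulVec,
      Matrix.adjugate_mul, Matrix.smul_mulVec, Matrix.one_mulVec, Pi.smul_apply, smul_eq_mul]
  rw [cramer, Matrix.det_apply']
  refine norm_finsetSum_lt_of_forall_lt hC fun σ _ => ?_
  have hcol : ∏ i ∈ Finset.univ.erase j, ‖M.updateCol j (M.mulVec a) (σ i) i‖ ≤ 1 :=
    Finset.prod_le_one (fun _ _ => norm_nonneg _) fun i hi => by
      rw [Matrix.updateCol_ne (Finset.ne_of_mem_erase hi)]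
      exact hM _ _
  rw [norm_mul, norm_prod, ← Finset.mul_prod_erase _ _ (Finset.mem_univ j), Matrix.updateCol_self]
  refine (mul_le_of_le_one_left (by positivity)
    (IsUltrametricDist.norm_intCast_le_one K _)).trans_lt ?_
  exact (mul_le_of_le_one_right (norm_nonneg _) hcol).trans_lt (h _)

variable [CharZero K] [IsAlgClosed K] {p : ℕ} [Fact p.Prime]

lemma exists_forall_isOfFinOrder_det_eq_zero [DecidableEq ι] (hpK : ‖(p : K)‖ < 1) {a : ι → K}
    {j : ι} (ha : a j ≠ 0) :
    ∃ c > 0, ∀ M : Matrix ι ι K, (∀ i k, IsOfFinOrder (M i k)) →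
      (∀ i, ‖M.mulVec a i‖ < c) → M.det = 0 := by
  obtain ⟨ε, hε, gap⟩ := exists_forall_norm_sum_intCast_mul_lt_imp_eq_zero hpK
    fun σ : Equiv.Perm ι => (Equiv.Perm.sign σ : ℤ)
  have ha' : 0 < ‖a j‖ := norm_pos_iff.2 ha
  refine ⟨ε * ‖a j‖, by positivity, fun M hM hlt => ?_⟩
  have hdet := norm_det_mul_lt_of_norm_mulVec_lt (by positivity)
    (fun i k => (hM i k).norm_eq_one.le) hlt j
  rw [norm_mul, mul_lt_mul_iff_left₀ ha', Matrix.det_apply'] at hdet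
  rw [Matrix.det_apply']
  exact gap _ (fun σ => Submonoid.prod_mem (CommMonoid.torsion K) fun i _ => hM (σ i) i) hdet

lemma exists_forall_norm_sum_mul_lt_imp_pow_eq_pow (hpK : ‖(p : K)‖ < 1) {a : ι → K} {j : ι}
    (ha : a j ≠ 0) :
    ∃ c > 0, ∃ B > 0, ∀ ζ : ι → K, (∀ i, IsOfFinOrder (ζ i)) →
      ‖∑ i, a i * ζ i‖ < c → ∃ i k, i ≠ k ∧ ζ i ^ B = ζ k ^ B := by
  classical
  obtain ⟨c, hc, hdet⟩ := exists_forall_isOfFinOrder_det_eq_zero hpK ha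
  obtain ⟨b, hb, hbT⟩ := exists_ne_zero_forall_sum_mul_eq_zero
    (T := {ζ : ι → K | (∀ i, IsOfFinOrder (ζ i)) ∧ ‖∑ i, a i * ζ i‖ < c}) fun M hM =>
      hdet M (fun i => (hM i).1) fun i => by
        rw [Matrix.mulVec, dotProduct_comm]
        exact (hM i).2
  obtain ⟨i, hi⟩ := Function.ne_iff.1 hb
  obtain ⟨B, hB, hpow⟩ := exists_pow_eq_pow_of_sum_mul_eq_zero hi
  exact ⟨c, hc, B, hB, fun ζ hζ hlt => hpow ζ hζ (hbT ζ ⟨hζ, hlt⟩)⟩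

end LinearForms

section RootsOfUnityAverages

open Polynomial

variable {K : Type*} [NormedField K]

lemma gaussNorm_X_sub_C (α : K) :
    (X - C α).gaussNorm (NormedField.toAbsoluteValue K) 1 = max 1 ‖α‖ := by
  set v := NormedField.toAbsoluteValue K
  refine le_antisymm ?_ (max_le ?_ ?_)
  · obtain ⟨i, hi⟩ := exists_eq_gaussNorm v 1 (X - C α)
    rw [hi, one_pow, mul_one]
    change ‖(X - C α).coeff i‖ ≤ max 1 ‖α‖
    rcases i with _ | _ | i <;> simp [coeff_X, coeff_C]
  · have hle := le_gaussNorm v (X - C α) zero_le_one 1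
    simpa [v, coeff_C] using hle
  · have hle := le_gaussNorm v (X - C α) zero_le_one 0
    change ‖(X - C α).coeff 0‖ * _ ≤ _ at hle
    simpa using hle

lemma norm_eval_eq_prod_roots {f : K[X]} (hf : f.Splits) (x : K) :
    ‖f.eval x‖ = ‖f.leadingCoeff‖ * (f.roots.map fun α => ‖x - α‖).prod := by
  rw [hf.eval_eq_prod_roots, norm_mul]
  congr 1
  simpa using map_multiset_prod (normHom : K →*₀ ℝ) (f.roots.map fun α => x - α)

variable [IsUltrametricDist K]

lemma norm_natCast_eq_one_of_coprime {m n : ℕ} (hn : ‖(n : K)‖ < 1) (hmn : m.Coprime n) :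
    ‖(m : K)‖ = 1 := by
  obtain ⟨a, b, hab⟩ := hmn.isCoprime
  have hbez : (a : K) * m + b * n = 1 := by exact_mod_cast congrArg (Int.cast : ℤ → K) hab
  have hb : ‖(b : K) * n‖ < 1 := by
    rw [norm_mul]
    exact (mul_le_of_le_one_left (norm_nonneg _)
      (IsUltrametricDist.norm_intCast_le_one K b)).trans_lt hn
  have ha : ‖(a : K) * m‖ = 1 := by
    rw [← norm_one (α := K)]
    refine norm_eq_of_norm_sub_lt_right ?_
    rwa [← hbez, sub_add_cancel_left, norm_neg, hbez, norm_one]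
  refine le_antisymm (IsUltrametricDist.norm_natCast_le_one K m) ?_
  rw [norm_mul] at ha
  rw [← ha]
  exact mul_le_of_le_one_left (norm_nonneg _) (IsUltrametricDist.norm_intCast_le_one K a)

lemma inv_natCast_le_norm_natCast {p : ℕ} [hp : Fact p.Prime] (hpK : ‖(p : K)‖ = (p : ℝ)⁻¹)
    {N : ℕ} (hN : N ≠ 0) : (N : ℝ)⁻¹ ≤ ‖(N : K)‖ := by
  obtain ⟨k, m, hpm, rfl⟩ := Nat.exists_eq_pow_mul_and_not_dvd hN p hp.out.ne_one
  have hpK1 : ‖(p : K)‖ < 1 :=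
    hpK.trans_lt (inv_lt_one_of_one_lt₀ (Nat.one_lt_cast.2 hp.out.one_lt))
  have hm : ‖(m : K)‖ = 1 :=
    norm_natCast_eq_one_of_coprime hpK1 (hp.out.coprime_iff_not_dvd.2 hpm).symm
  have hm1 : (1 : ℝ) ≤ m := by
    exact_mod_cast Nat.one_le_iff_ne_zero.2 (right_ne_zero_of_mul hN)
  have hpk : 0 < (p : ℝ) ^ k := pow_pos (Nat.cast_pos.2 hp.out.pos) k
  rw [Nat.cast_mul, Nat.cast_mul, Nat.cast_pow, Nat.cast_pow, norm_mul, hm, mul_one, norm_pow, hpK,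
    inv_pow]
  exact inv_anti₀ hpk (le_mul_of_one_le_right hpk.le hm1)

lemma norm_sub_le_max_norm {E : Type*} [SeminormedAddCommGroup E] [IsUltrametricDist E] (x y : E) :
    ‖x - y‖ ≤ max ‖x‖ ‖y‖ := by
  rw [sub_eq_add_neg, ← norm_neg y]
  exact IsUltrametricDist.norm_add_le_max x (-y)

lemma norm_sub_le_max_one {x : K} (hx : ‖x‖ ≤ 1) (α : K) : ‖x - α‖ ≤ max 1 ‖α‖ :=
  (norm_sub_le_max_norm x α).trans (max_le_max_right _ hx)

lemma norm_sub_mul_max_one_le {x y α : K} (hx : ‖x‖ ≤ 1) (hy : ‖y‖ ≤ 1)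
    (hxy : ‖x - α‖ ≤ ‖y - α‖) : ‖x - y‖ * max 1 ‖α‖ ≤ ‖y - α‖ := by
  rcases le_or_gt ‖α‖ 1 with hα | hα
  · rw [max_eq_left hα, mul_one, ← sub_sub_sub_cancel_right x y α]
    exact (norm_sub_le_max_norm _ _).trans (max_le hxy le_rfl)
  · have hyα : ‖y - α‖ = ‖α‖ := by
      rw [norm_sub_rev]
      refine norm_eq_of_norm_sub_lt_right ?_
      rw [sub_sub_cancel_left, norm_neg]
      exact hy.trans_lt hα
    rw [max_eq_right hα.le, hyα]
    exact mul_le_of_le_one_left (norm_nonneg α) ((norm_sub_le_max_norm x y).trans (max_le hx hy))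

lemma sum_log_max_one_sub_log_norm_sub_le {S : Finset K} (hS : S.Nonempty)
    (hS1 : ∀ x ∈ S, ‖x‖ ≤ 1) {α : K} {c : ℝ} (hc : 0 < c)
    (h : ∀ x ∈ S, c * max 1 ‖α‖ ≤ ‖x - α‖) [DecidableEq K] :
    ∃ x ∈ S, ∑ y ∈ S, (Real.log (max 1 ‖α‖) - Real.log ‖y - α‖) ≤
      Real.log (1 / c) - ∑ y ∈ S.erase x, Real.log ‖x - y‖ := by
  obtain ⟨x, hx, hmin⟩ := S.exists_min_image (fun y => ‖y - α‖) hS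
  have hmax : 0 < max 1 ‖α‖ := lt_max_of_lt_left one_pos
  have hpos : ∀ y ∈ S, 0 < ‖y - α‖ := fun y hy => (mul_pos hc hmax).trans_le (h y hy)
  refine ⟨x, hx, ?_⟩
  rw [← Finset.add_sum_erase _ _ hx, sub_eq_add_neg (Real.log (1 / c)), ← Finset.sum_neg_distrib]
  refine add_le_add ?_ (Finset.sum_le_sum fun y hy => ?_)
  · rw [← Real.log_div hmax.ne' (hpos x hx).ne']
    refine Real.log_le_log (div_pos hmax (hpos x hx)) ?_
    rw [div_le_div_iff₀ (hpos x hx) hc, one_mul, mul_comm]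
    exact h x hx
  · obtain ⟨hyx, hyS⟩ := Finset.mem_erase.1 hy
    have hxy : 0 < ‖x - y‖ := norm_pos_iff.2 (sub_ne_zero.2 hyx.symm)
    have hlog := Real.log_le_log (mul_pos hxy hmax)
      (norm_sub_mul_max_one_le (hS1 x hx) (hS1 y hyS) (hmin y hyS))
    rw [Real.log_mul hxy.ne' hmax.ne'] at hlog
    linarith

lemma prod_sub_eq_natCast_mul_pow {R : Type*} [CommRing R] [IsDomain R] [DecidableEq R] {N : ℕ}
    {θ x : R} (hN : 0 < N) (hθ : IsPrimitiveRoot θ N) (hx : x ∈ nthRootsFinset N (1 : R)) :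
    ∏ y ∈ (nthRootsFinset N (1 : R)).erase x, (x - y) = N * x ^ (N - 1) := by
  have hderiv := Lagrange.eval_nodal_derivative_eval_node_eq (v := id) hx
  rw [Lagrange.eval_nodal, Lagrange.nodal] at hderiv
  simp only [id_eq, ← X_pow_sub_one_eq_prod hN hθ, derivative_sub, derivative_X_pow,
    derivative_one, sub_zero] at hderiv
  simpa using hderiv.symm

lemma neg_sum_erase_log_norm_sub_le [DecidableEq K] {p : ℕ} [hp : Fact p.Prime]
    (hpK : ‖(p : K)‖ = (p : ℝ)⁻¹) {N : ℕ} (hN : 0 < N) {θ : K} (hθ : IsPrimitiveRoot θ N)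
    {S : Finset K} (hS : S ⊆ nthRootsFinset N (1 : K)) {x : K} (hx : x ∈ S) :
    -∑ y ∈ S.erase x, Real.log ‖x - y‖ ≤ Real.log N := by
  have norm_root : ∀ y ∈ nthRootsFinset N (1 : K), ‖y‖ = 1 := fun y hy =>
    (isOfFinOrder_iff_pow_eq_one.2 ⟨N, hN, (mem_nthRootsFinset hN _).1 hy⟩).norm_eq_one
  have hle1 : ∀ y ∈ nthRootsFinset N (1 : K), ‖x - y‖ ≤ 1 := fun y hy =>
    (norm_sub_le_max_norm x y).trans (max_le (norm_root x (hS hx)).le (norm_root y hy).le)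
  have hne : ∀ y ∈ (nthRootsFinset N (1 : K)).erase x, ‖x - y‖ ≠ 0 := fun y hy =>
    norm_ne_zero_iff.2 (sub_ne_zero.2 (Finset.ne_of_mem_erase hy).symm)
  calc -∑ y ∈ S.erase x, Real.log ‖x - y‖
      ≤ ∑ y ∈ (nthRootsFinset N (1 : K)).erase x, -Real.log ‖x - y‖ := by
        rw [← Finset.sum_neg_distrib]
        refine Finset.sum_le_sum_of_subset_of_nonneg (Finset.erase_subset_erase x hS)
          fun y hy _ => ?_
        exact neg_nonneg.2 (Real.log_nonpos (norm_nonneg _) (hle1 y (Finset.mem_of_mem_erase hy)))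
    _ = -Real.log ‖(N : K)‖ := by
        rw [Finset.sum_neg_distrib, ← Real.log_prod hne, ← norm_prod,
          prod_sub_eq_natCast_mul_pow hN hθ (hS hx), norm_mul, norm_pow, norm_root x (hS hx),
          one_pow, mul_one]
    _ ≤ Real.log N := by
        have hlog := Real.log_le_log (by positivity) (inv_natCast_le_norm_natCast hpK hN.ne')
        rw [Real.log_inv] at hlog
        linarith

variable {f : K[X]}

lemma gaussNorm_eq_prod_roots (hf : f.Splits) :
    f.gaussNorm (NormedField.toAbsoluteValue K) 1 =
      ‖f.leadingCoeff‖ * (f.roots.map fun α => max 1 ‖α‖).prod := by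
  have hna : IsNonarchimedean (NormedField.toAbsoluteValue K) :=
    IsUltrametricDist.isNonarchimedean_norm
  have hprod : ∀ s : Multiset K, (s.map fun α => X - C α).prod.gaussNorm
      (NormedField.toAbsoluteValue K) 1 = (s.map fun α => max 1 ‖α‖).prod := fun s => by
    induction s using Multiset.induction with
    | empty => simpa using gaussNorm_C (NormedField.toAbsoluteValue K) 1 (1 : K)
    | cons α s ih =>
      rw [Multiset.map_cons, Multiset.map_cons, Multiset.prod_cons, Multiset.prod_cons,
        gaussNorm_mul hna one_pos, gaussNorm_X_sub_C, ih]
  conv_lhs => rw [hf.eq_prod_roots]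
  rw [gaussNorm_mul hna one_pos, gaussNorm_C, hprod]
  rfl

lemma norm_eval_mul_max_one_le (hf : f.Splits) {x α : K} (hx : ‖x‖ ≤ 1) (hα : α ∈ f.roots) :
    ‖f.eval x‖ * max 1 ‖α‖ ≤ f.gaussNorm (NormedField.toAbsoluteValue K) 1 * ‖x - α‖ := by
  rw [norm_eval_eq_prod_roots hf, gaussNorm_eq_prod_roots hf]
  obtain ⟨s, hs⟩ := Multiset.exists_cons_of_mem hα
  rw [hs, Multiset.map_cons, Multiset.map_cons, Multiset.prod_cons, Multiset.prod_cons]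
  have hle : (s.map fun β => ‖x - β‖).prod ≤ (s.map fun β => max 1 ‖β‖).prod :=
    Multiset.prod_map_le_prod_map₀ _ _ (fun _ _ => norm_nonneg _)
      fun β _ => norm_sub_le_max_one hx β
  calc ‖f.leadingCoeff‖ * (‖x - α‖ * (s.map fun β => ‖x - β‖).prod) * max 1 ‖α‖
      ≤ ‖f.leadingCoeff‖ * (‖x - α‖ * (s.map fun β => max 1 ‖β‖).prod) * max 1 ‖α‖ := by gcongr
    _ = _ := by ring

lemma log_gaussNorm_sub_log_norm_eval (hf : f.Splits) {x : K} (hx : f.eval x ≠ 0) :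
    Real.log (f.gaussNorm (NormedField.toAbsoluteValue K) 1) - Real.log ‖f.eval x‖ =
      (f.roots.map fun α => Real.log (max 1 ‖α‖) - Real.log ‖x - α‖).sum := by
  have hlead : ‖f.leadingCoeff‖ ≠ 0 :=
    norm_ne_zero_iff.2 (leadingCoeff_ne_zero.2 fun h => hx (by rw [h, eval_zero]))
  have hmax : ∀ y ∈ f.roots.map fun α => max 1 ‖α‖, y ≠ 0 := by
    simp only [Multiset.mem_map]
    rintro _ ⟨α, -, rfl⟩
    exact (lt_max_of_lt_left one_pos).ne'
  have hsub : ∀ y ∈ f.roots.map fun α => ‖x - α‖, y ≠ 0 := by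
    simp only [Multiset.mem_map]
    rintro _ ⟨α, hα, rfl⟩
    refine norm_ne_zero_iff.2 (sub_ne_zero.2 ?_)
    rintro rfl
    exact hx (isRoot_of_mem_roots hα)
  rw [norm_eval_eq_prod_roots hf, gaussNorm_eq_prod_roots hf,
    Real.log_mul hlead (Multiset.prod_ne_zero fun h => hmax 0 h rfl),
    Real.log_mul hlead (Multiset.prod_ne_zero fun h => hsub 0 h rfl),
    Real.log_multiset_prod hmax, Real.log_multiset_prod hsub, Multiset.map_map, Multiset.map_map,
    Multiset.sum_map_sub, add_sub_add_left_eq_sub]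
  rfl

lemma sum_log_gaussNorm_sub_log_norm_eval_le [IsAlgClosed K] {p : ℕ} [hp : Fact p.Prime]
    (hpK : ‖(p : K)‖ = (p : ℝ)⁻¹) {N : ℕ} (hN : 0 < N) {θ : K} (hθ : IsPrimitiveRoot θ N)
    {S : Finset K} (hS : S ⊆ nthRootsFinset N (1 : K)) {c : ℝ} (hc : 0 < c) (hc1 : c ≤ 1)
    (h : ∀ x ∈ S, c * f.gaussNorm (NormedField.toAbsoluteValue K) 1 ≤ ‖f.eval x‖) :
    ∑ x ∈ S, (Real.log (f.gaussNorm (NormedField.toAbsoluteValue K) 1) - Real.log ‖f.eval x‖) ≤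
      f.natDegree * (Real.log (1 / c) + Real.log N) := by
  classical
  rcases eq_or_ne f 0 with rfl | hf
  · simp
  have hsplit : f.Splits := IsAlgClosed.splits f
  have hG : 0 < f.gaussNorm (NormedField.toAbsoluteValue K) 1 :=
    (gaussNorm_nonneg _ _ zero_le_one).lt_of_ne' fun h0 =>
      hf ((gaussNorm_eq_zero_iff _ f (fun _ => (map_eq_zero _).1) one_pos).1 h0)
  have hS1 : ∀ x ∈ S, ‖x‖ ≤ 1 := fun x hx =>
    (isOfFinOrder_iff_pow_eq_one.2 ⟨N, hN, (mem_nthRootsFinset hN _).1 (hS hx)⟩).norm_eq_one.le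
  have hroot : ∀ α ∈ f.roots, ∑ x ∈ S, (Real.log (max 1 ‖α‖) - Real.log ‖x - α‖) ≤
      Real.log (1 / c) + Real.log N := fun α hα => by
    rcases S.eq_empty_or_nonempty with rfl | hne
    · rw [Finset.sum_empty]
      exact add_nonneg (Real.log_nonneg ((one_le_div hc).2 hc1)) (Real.log_natCast_nonneg N)
    obtain ⟨x, hx, hle⟩ := sum_log_max_one_sub_log_norm_sub_le hne hS1 (α := α) hc fun x hx => by
      refine le_of_mul_le_mul_left ?_ hG
      refine le_trans ?_ (norm_eval_mul_max_one_le hsplit (hS1 x hx) hα)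
      rw [← mul_assoc, mul_comm _ c]
      exact mul_le_mul_of_nonneg_right (h x hx) (by positivity)
    linarith [neg_sum_erase_log_norm_sub_le hpK hN hθ hS hx]
  calc ∑ x ∈ S, (Real.log (f.gaussNorm (NormedField.toAbsoluteValue K) 1) - Real.log ‖f.eval x‖)
      = (f.roots.map fun α => ∑ x ∈ S, (Real.log (max 1 ‖α‖) - Real.log ‖x - α‖)).sum := by
        rw [Multiset.sum_map_sum]
        refine Finset.sum_congr rfl fun x hx => log_gaussNorm_sub_log_norm_eval hsplit ?_
        exact norm_pos_iff.1 ((mul_pos hc hG).trans_le (h x hx))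
    _ ≤ Multiset.card f.roots • (Real.log (1 / c) + Real.log N) := by
        rw [← Multiset.card_map]
        refine Multiset.sum_le_card_nsmul _ _ fun y hy => ?_
        obtain ⟨α, hα, rfl⟩ := Multiset.mem_map.1 hy
        exact hroot α hα
    _ = f.natDegree * (Real.log (1 / c) + Real.log N) := by
        rw [nsmul_eq_mul, hsplit.natDegree_eq_card_roots]

end RootsOfUnityAverages

section TotientAndPigeonhole

lemma inv_card_add_one_le_prod_one_sub_inv {k : Type*} [Field k] [LinearOrder k]
    [IsStrictOrderedRing k] (S : Finset ℕ) (hS : ∀ q ∈ S, 2 ≤ q) :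
    (S.card + 1 : k)⁻¹ ≤ ∏ q ∈ S, (1 - (q : k)⁻¹) := by
  induction S using Finset.induction_on_max with
  | empty => simp
  | insert m S hm ih =>
    have hmS : m ∉ S := fun hmem => (hm m hmem).false
    have hcard : S.card + 2 ≤ m := by
      have hsub : S ⊆ Finset.Ico 2 m := fun q hq =>
        Finset.mem_Ico.2 ⟨hS q (Finset.mem_insert_of_mem hq), hm q hq⟩
      have hle := Finset.card_le_card hsub
      have hm2 := hS m (Finset.mem_insert_self m S)
      rw [Nat.card_Ico] at hle
      omega
    have hfactor : (S.card + 1 : k) / (S.card + 2) ≤ 1 - (m : k)⁻¹ := by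
      have hinv : (m : k)⁻¹ ≤ (S.card + 2 : k)⁻¹ :=
        inv_anti₀ (by positivity) (by exact_mod_cast hcard)
      calc (S.card + 1 : k) / (S.card + 2) = 1 - (S.card + 2 : k)⁻¹ := by field_simp; ring
        _ ≤ 1 - (m : k)⁻¹ := sub_le_sub_left hinv 1
    rw [Finset.prod_insert hmS, Finset.card_insert_of_notMem hmS]
    calc ((S.card + 1 : ℕ) + 1 : k)⁻¹
        = (S.card + 1) / (S.card + 2) * (S.card + 1 : k)⁻¹ := by push_cast; field_simp; ring
      _ ≤ _ := mul_le_mul hfactor (ih fun q hq => hS q (Finset.mem_insert_of_mem hq))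
          (by positivity) (le_trans (by positivity) hfactor)

lemma le_totient_mul_card_primeFactors_add_one (N : ℕ) :
    N ≤ N.totient * (N.primeFactors.card + 1) := by
  have hprod := inv_card_add_one_le_prod_one_sub_inv (k := ℚ) N.primeFactors fun q hq =>
    (Nat.prime_of_mem_primeFactors hq).two_le
  have hle : (N : ℚ) * (N.primeFactors.card + 1 : ℚ)⁻¹ ≤ N.totient := by
    rw [Nat.totient_eq_mul_prod_factors N]
    exact mul_le_mul_of_nonneg_left hprod N.cast_nonneg
  rw [← div_eq_mul_inv, div_le_iff₀ (by positivity)] at hle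
  exact_mod_cast hle

lemma card_primeFactors_le_log {N : ℕ} (hN : N ≠ 0) : N.primeFactors.card ≤ Nat.log 2 N := by
  refine Nat.le_log_of_pow_le one_lt_two ?_
  calc 2 ^ N.primeFactors.card ≤ ∏ q ∈ N.primeFactors, q :=
        Finset.pow_card_le_prod _ _ _ fun q hq => (Nat.prime_of_mem_primeFactors hq).two_le
    _ ≤ N := Nat.le_of_dvd (Nat.pos_of_ne_zero hN) (Nat.prod_primeFactors_dvd N)

lemma natCast_le_totient_mul_log {N : ℕ} (hN : N ≠ 0) :
    (N : ℝ) ≤ N.totient * (Real.log N / Real.log 2 + 1) := by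
  have hcard : (N.primeFactors.card : ℝ) ≤ Real.log N / Real.log 2 :=
    (Nat.cast_le.2 (card_primeFactors_le_log hN)).trans (Real.natLog_le_logb N 2)
  have hle : (N : ℝ) ≤ N.totient * (N.primeFactors.card + 1) := by
    exact_mod_cast le_totient_mul_card_primeFactors_add_one N
  exact hle.trans (by gcongr)

lemma natAbs_sub_mul_le_of_mul_div_eq {a b H N : ℕ} (hN : 0 < N)
    (h : a * H / N = b * H / N) : ((a : ℤ) - b).natAbs * H ≤ N := by
  have ha := Nat.div_add_mod (a * H) N
  have hb := Nat.div_add_mod (b * H) N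
  have ha' := Nat.mod_lt (a * H) hN
  have hb' := Nat.mod_lt (b * H) hN
  rw [h] at ha
  zify at ha hb ha' hb'
  have habs : |((a : ℤ) - b) * H| ≤ N := by
    rw [abs_le, sub_mul]
    constructor <;> linarith [Int.emod_nonneg ((a : ℤ) * H) (by lia : (N : ℤ) ≠ 0),
      Int.emod_nonneg ((b : ℤ) * H) (by lia : (N : ℤ) ≠ 0)]
  rw [abs_mul, Nat.abs_cast, Int.abs_eq_natAbs] at habs
  exact_mod_cast habs

lemma exists_ne_zero_forall_intCast_eq_mul {ι : Type*} [Fintype ι] {N H : ℕ} [NeZero N]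
    (hH : 0 < H) (hHN : H ^ Fintype.card ι < N) (b : ι → ZMod N) :
    ∃ (u : ZMod N) (x : ι → ℤ), u ≠ 0 ∧ (∀ i, (x i : ZMod N) = u * b i) ∧
      ∀ i, (x i).natAbs * H ≤ N := by
  classical
  obtain ⟨k, -, l, -, hkl, heq⟩ := Finset.exists_ne_map_eq_of_card_lt_of_maps_to
    (s := Finset.univ) (t := Fintype.piFinset fun _ : ι => Finset.range H)
    (f := fun (k : ZMod N) i => (k * b i).val * H / N)
    (by simpa [Fintype.card_piFinset, ZMod.card] using hHN) fun k _ => by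
      rw [Finset.mem_coe, Fintype.mem_piFinset]
      intro i
      rw [Finset.mem_range, Nat.div_lt_iff_lt_mul (NeZero.pos N), mul_comm]
      exact Nat.mul_lt_mul_of_pos_left (ZMod.val_lt _) hH
  refine ⟨k - l, fun i => (k * b i).val - (l * b i).val, sub_ne_zero.2 hkl, fun i => ?_,
    fun i => natAbs_sub_mul_le_of_mul_div_eq (NeZero.pos N) (congrFun heq i)⟩
  simp [sub_mul]

lemma card_mul_sum_comp_eq_of_surjective {G H : Type*} [Group G] [Group H] [Fintype G] [Fintype H]
    {R : Type*} [CommSemiring R] {f : G →* H} (hf : Function.Surjective f) (φ : H → R) :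
    (Fintype.card H : R) * ∑ g, φ (f g) = Fintype.card G * ∑ h, φ h := by
  classical
  have hfiber : ∀ h, (Finset.univ.filter fun g => f g = h).card =
      (Finset.univ.filter fun g => f g = 1).card := fun h =>
    MonoidHom.card_fiber_eq_of_mem_range f (hf h) (hf 1)
  have hcard : Fintype.card G = Fintype.card H * (Finset.univ.filter fun g => f g = 1).card := by
    rw [← Finset.card_univ, Finset.card_eq_sum_card_fiberwise (f := f) (t := Finset.univ) (by simp),
      Finset.sum_congr rfl fun h _ => hfiber h, Finset.sum_const, Finset.card_univ, smul_eq_mul]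
  have hsum : ∑ g, φ (f g) = (Finset.univ.filter fun g => f g = 1).card * ∑ h, φ h := by
    rw [← Finset.sum_fiberwise (s := Finset.univ) (g := f), Finset.mul_sum]
    refine Finset.sum_congr rfl fun h _ => ?_
    rw [← hfiber h, ← nsmul_eq_mul, ← Finset.sum_const]
    exact Finset.sum_congr rfl fun g hg => by rw [(Finset.mem_filter.1 hg).2]
  rw [hsum, hcard, Nat.cast_mul, mul_assoc]

lemma sum_sum_filter_add_eq_card_nsmul {G A : Type*} [AddGroup G] [Fintype G] [AddCommMonoid A]
    (P : G → Prop) [DecidablePred P] (v : G → G) (g : G → A) :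
    ∑ σ, ∑ k with P (σ + v k), g (σ + v k) = Fintype.card G • ∑ τ with P τ, g τ := by
  simp only [Finset.sum_filter]
  rw [Finset.sum_comm, ← Finset.card_univ, ← Finset.sum_const]
  exact Finset.sum_congr rfl fun k _ =>
    Equiv.sum_comp (Equiv.addRight (v k)) fun τ => if P τ then g τ else 0

open Filter Asymptotics in
lemma eventually_log_mul_log_le_rpow (L : ℝ) {r : ℝ} (hr : 0 < r) :
    ∀ᶠ N : ℕ in atTop,
      4 * (Real.log N / Real.log 2 + 1) * (L + Real.log N) ≤ (N : ℝ) ^ r := by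
  have hconst : ∀ c : ℝ, (fun _ : ℝ => c) =o[atTop] fun x : ℝ => x ^ (r / 2) := fun c =>
    isLittleO_const_left.2 (Or.inr
      (tendsto_norm_atTop_atTop.comp (tendsto_rpow_atTop (half_pos hr))))
  have hlog := isLittleO_log_rpow_atTop (half_pos hr)
  have hprod := ((((hlog.const_mul_left (Real.log 2)⁻¹).add (hconst 1)).const_mul_left 4).mul
    ((hconst L).add hlog)).def one_pos
  filter_upwards [tendsto_natCast_atTop_atTop.eventually hprod] with N hN
  refine (le_abs_self _).trans ?_
  have hpow : (N : ℝ) ^ (r / 2) * (N : ℝ) ^ (r / 2) = (N : ℝ) ^ r := by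
    rw [← Real.rpow_add_of_nonneg N.cast_nonneg (half_pos hr).le (half_pos hr).le, add_halves]
  rw [hpow, one_mul, Real.norm_of_nonneg (Real.rpow_nonneg N.cast_nonneg r)] at hN
  rwa [div_eq_inv_mul]

lemma exists_natCast_le_le_two_mul {x : ℝ} (hx : 1 ≤ x) :
    ∃ m : ℕ, 0 < m ∧ (m : ℝ) ≤ x ∧ x ≤ 2 * m := by
  have hpos : 0 < ⌊x⌋₊ := Nat.floor_pos.2 hx
  refine ⟨⌊x⌋₊, hpos, Nat.floor_le (by linarith), ?_⟩
  have hfloor := Nat.lt_floor_add_one x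
  have : (1 : ℝ) ≤ ⌊x⌋₊ := Nat.one_le_cast.2 hpos
  linarith

open Filter in
lemma eventually_exists_pow_lt_and_le_totient_mul_rpow {T : ℕ} (hT : 0 < T) {L : ℝ} (hL : 0 ≤ L) :
    ∀ᶠ N : ℕ in atTop, ∃ H : ℕ, 0 < H ∧ H ^ T < N ∧
      2 * ((N : ℝ) / H) * (L + Real.log N) ≤ N.totient * (N : ℝ) ^ (-(1 / (4 * T) : ℝ)) := by
  filter_upwards [eventually_log_mul_log_le_rpow L (r := 1 / (4 * T)) (by positivity),
    eventually_ge_atTop 2] with N hlog hN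
  have hN0 : (0 : ℝ) < N := by positivity
  have hN1 : (1 : ℝ) < N := Nat.one_lt_cast.2 hN
  set w : ℝ := (N : ℝ) ^ (1 / (4 * T) : ℝ) with hw
  have hw0 : 0 < w := Real.rpow_pos_of_pos hN0 _
  have hw1 : 1 < w := Real.one_lt_rpow hN1 (by positivity)
  have hwT : w ^ (4 * T) = N := by
    rw [hw, ← Real.rpow_natCast, ← Real.rpow_mul hN0.le]
    push_cast
    rw [one_div_mul_cancel (by positivity), Real.rpow_one]
  obtain ⟨H, hHpos, hHle, hleH⟩ := exists_natCast_le_le_two_mul (one_le_pow₀ hw1.le : 1 ≤ w ^ 2)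
  refine ⟨H, hHpos, ?_, ?_⟩
  · have hlt : (H : ℝ) ^ T < N := by
      calc (H : ℝ) ^ T ≤ (w ^ 2) ^ T := pow_le_pow_left₀ (Nat.cast_nonneg _) hHle T
        _ = w ^ (2 * T) := (pow_mul w 2 T).symm
        _ < w ^ (4 * T) := pow_lt_pow_right₀ hw1 (by lia)
        _ = N := hwT
    exact_mod_cast hlt
  have hφ := natCast_le_totient_mul_log (N := N) (by lia)
  have hlogs : 0 ≤ L + Real.log N := add_nonneg hL (Real.log_nonneg hN1.le)
  have hNH : (N : ℝ) / H ≤ 2 * N / w ^ 2 := by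
    rw [div_le_div_iff₀ (Nat.cast_pos.2 hHpos) (by positivity)]
    linarith [mul_le_mul_of_nonneg_left hleH hN0.le]
  calc 2 * ((N : ℝ) / H) * (L + Real.log N)
      ≤ 2 * (2 * (N.totient * (Real.log N / Real.log 2 + 1)) / w ^ 2) * (L + Real.log N) := by
        refine mul_le_mul_of_nonneg_right ?_ hlogs
        have : 2 * (N : ℝ) / w ^ 2 ≤ 2 * (N.totient * (Real.log N / Real.log 2 + 1)) / w ^ 2 := by
          gcongr
        linarith
    _ = N.totient * (4 * (Real.log N / Real.log 2 + 1) * (L + Real.log N)) / w ^ 2 := by ring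
    _ ≤ N.totient * w / w ^ 2 := by gcongr
    _ = N.totient * (N : ℝ) ^ (-(1 / (4 * T) : ℝ)) := by
        rw [Real.rpow_neg hN0.le, ← hw]
        field_simp

end TotientAndPigeonhole

section ExponentialSums

variable {K ι : Type*} {M N : ℕ}

section Algebra

variable [Field K]

/-- The exponential sum `∑ i ∈ s, a i * χ (b i * τ)` with coefficients `a` and frequencies `b`.
Its values at the units `τ` are the Galois conjugates of the value of a Laurent polynomial at a
torsion point. -/
def expSum (χ : AddChar (ZMod N) K) (s : Finset ι) (a : ι → K) (b : ι → ZMod N) (τ : ZMod N) : K :=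
  ∑ i ∈ s, a i * χ (b i * τ)

lemma expSum_eq_mul_expSum_sub_const (χ : AddChar (ZMod N) K) (s : Finset ι) (a : ι → K)
    (b : ι → ZMod N) (β τ : ZMod N) :
    expSum χ s a b τ = χ (β * τ) * expSum χ s a (fun i => b i - β) τ := by
  rw [expSum, expSum, Finset.mul_sum]
  refine Finset.sum_congr rfl fun i _ => ?_
  rw [mul_left_comm, ← AddChar.map_add_eq_mul, ← add_mul, add_sub_cancel]

lemma expSum_congr {χ : AddChar (ZMod N) K} {s : Finset ι} {a : ι → K} {b b' : ι → ZMod N}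
    (h : ∀ i ∈ s, b i = b' i) (τ : ZMod N) : expSum χ s a b τ = expSum χ s a b' τ :=
  Finset.sum_congr rfl fun i hi => by rw [h i hi]

lemma map_mul_castHom (h : M ∣ N) (j : ZMod M →+ ZMod N) (x : ZMod M) (τ : ZMod N) :
    j (x * ZMod.castHom h (ZMod M) τ) = j x * τ := by
  obtain ⟨t, rfl⟩ := ZMod.intCast_surjective τ
  rw [map_intCast, mul_comm, ← zsmul_eq_mul, map_zsmul, zsmul_eq_mul, mul_comm]

lemma expSum_compAddMonoidHom (h : M ∣ N) (χ : AddChar (ZMod N) K) (j : ZMod M →+ ZMod N)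
    (s : Finset ι) (a : ι → K) (b : ι → ZMod M) (τ : ZMod N) :
    expSum (χ.compAddMonoidHom j) s a b (ZMod.castHom h (ZMod M) τ) =
      expSum χ s a (fun i => j (b i)) τ := by
  simp only [expSum, AddChar.compAddMonoidHom_apply, map_mul_castHom]

lemma expSum_filter_add_mul {u : ZMod N} {b : ι → ZMod N} {x : ι → ℤ}
    (hx : ∀ i, (x i : ZMod N) = u * b i) (χ : AddChar (ZMod N) K) (s : Finset ι) (a : ι → K)
    (m : ℤ) (σ k : ZMod N) :
    expSum χ {i ∈ s | x i = m} a b (σ + u * k) = χ (m * k) * expSum χ {i ∈ s | x i = m} a b σ := by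
  rw [expSum, expSum, Finset.mul_sum]
  refine Finset.sum_congr rfl fun i hi => ?_
  rw [← (Finset.mem_filter.1 hi).2, hx, mul_left_comm, ← AddChar.map_add_eq_mul]
  congr 2
  ring

open Polynomial in
/-- The polynomial whose values at the `N`-th roots of unity `χ k` are, up to a root of unity, the
values of `expSum χ s a b` along the line `σ + u * k`, where `x` lifts `u * b` to `ℤ`. The shift by
`R` makes all exponents nonnegative when `|x i| ≤ R`. -/
noncomputable def linePolynomial (χ : AddChar (ZMod N) K) (s : Finset ι) (a : ι → K)
    (b : ι → ZMod N) (x : ι → ℤ) (R : ℕ) (σ : ZMod N) : K[X] :=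
  ∑ i ∈ s, monomial (x i + R).toNat (a i * χ (b i * σ))

lemma isPrimitiveRoot_apply_one_of_injective {χ : AddChar (ZMod N) K}
    (hχ : Function.Injective χ) : IsPrimitiveRoot (χ 1) N := by
  have hpow : ∀ k : ℕ, χ 1 ^ k = χ k := fun k => by
    rw [← AddChar.map_nsmul_eq_pow, nsmul_one]
  refine ⟨by rw [hpow, ZMod.natCast_self, AddChar.map_zero_eq_one], fun k hk => ?_⟩
  rw [hpow, ← AddChar.map_zero_eq_one χ] at hk
  exact (ZMod.natCast_eq_zero_iff k N).1 (hχ hk)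

lemma apply_mem_nthRootsFinset [NeZero N] (χ : AddChar (ZMod N) K) (k : ZMod N) :
    χ k ∈ Polynomial.nthRootsFinset N (1 : K) := by
  rw [Polynomial.mem_nthRootsFinset (NeZero.pos N), ← AddChar.map_nsmul_eq_pow, nsmul_eq_mul,
    ZMod.natCast_self, zero_mul, AddChar.map_zero_eq_one]

variable {χ : AddChar (ZMod N) K} {s : Finset ι} {a : ι → K} {b : ι → ZMod N} {x : ι → ℤ} {R : ℕ}

lemma eval_linePolynomial {u : ZMod N} (hx : ∀ i, (x i : ZMod N) = u * b i)
    (hR : ∀ i, (x i).natAbs ≤ R) (σ k : ZMod N) :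
    (linePolynomial χ s a b x R σ).eval (χ k) = χ (R * k) * expSum χ s a b (σ + u * k) := by
  rw [linePolynomial, Polynomial.eval_finsetSum, expSum, Finset.mul_sum]
  refine Finset.sum_congr rfl fun i _ => ?_
  have hexp : ((x i + R).toNat : ZMod N) = u * b i + R := by
    have hnonneg : 0 ≤ x i + R := by have := hR i; lia
    rw [← Int.cast_natCast, Int.toNat_of_nonneg hnonneg, Int.cast_add, hx, Int.cast_natCast]
  rw [Polynomial.eval_monomial, ← AddChar.map_nsmul_eq_pow, nsmul_eq_mul, hexp, mul_assoc,
    ← AddChar.map_add_eq_mul, mul_left_comm, ← AddChar.map_add_eq_mul]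
  congr 2
  ring

lemma coeff_linePolynomial (hR : ∀ i, (x i).natAbs ≤ R) (σ : ZMod N) (i₀ : ι) :
    (linePolynomial χ s a b x R σ).coeff (x i₀ + R).toNat =
      expSum χ {i ∈ s | x i = x i₀} a b σ := by
  rw [linePolynomial, Polynomial.finsetSum_coeff, expSum, Finset.sum_filter]
  refine Finset.sum_congr rfl fun i _ => ?_
  have hiff : (x i + R).toNat = (x i₀ + R).toNat ↔ x i = x i₀ := by
    have := hR i
    have := hR i₀
    lia
  simp only [Polynomial.coeff_monomial, hiff]

lemma natDegree_linePolynomial_le (hR : ∀ i, (x i).natAbs ≤ R) (σ : ZMod N) :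
    (linePolynomial χ s a b x R σ).natDegree ≤ 2 * R :=
  Polynomial.natDegree_sum_le_of_forall_le _ _ fun i _ =>
    (Polynomial.natDegree_monomial_le _).trans (by have := hR i; lia)

end Algebra

variable [NormedField K] [NeZero N]

/-- The average of `-log ‖expSum χ s a b τ‖` over the units `τ`; it measures how far the Galois
average of `log ‖F‖` falls below the value `0` predicted by equidistribution when the coefficients
have maximal norm `1`. -/
noncomputable def logDefect (χ : AddChar (ZMod N) K) (s : Finset ι) (a : ι → K) (b : ι → ZMod N) :
    ℝ :=
  (∑ τ : (ZMod N)ˣ, -Real.log ‖expSum χ s a b τ‖) / N.totient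

lemma logDefect_eq_of_norm_eq (h : M ∣ N) [NeZero M] {χ : AddChar (ZMod N) K}
    {χ₀ : AddChar (ZMod M) K} {s : Finset ι} {a : ι → K} {b : ι → ZMod N} {b₀ : ι → ZMod M}
    (hnorm : ∀ τ, ‖expSum χ s a b τ‖ = ‖expSum χ₀ s a b₀ (ZMod.castHom h (ZMod M) τ)‖) :
    logDefect χ s a b = logDefect χ₀ s a b₀ := by
  have havg := card_mul_sum_comp_eq_of_surjective (ZMod.unitsMap_surjective h)
    fun τ => -Real.log ‖expSum χ₀ s a b₀ τ‖
  rw [ZMod.card_units_eq_totient, ZMod.card_units_eq_totient] at havg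
  have hN : (N.totient : ℝ) ≠ 0 := Nat.cast_ne_zero.2 (Nat.totient_pos.2 (NeZero.pos N)).ne'
  have hM : (M.totient : ℝ) ≠ 0 := Nat.cast_ne_zero.2 (Nat.totient_pos.2 (NeZero.pos M)).ne'
  rw [logDefect, logDefect, div_eq_div_iff hN hM, mul_comm, mul_comm _ (N.totient : ℝ), ← havg]
  simp only [hnorm]
  rfl

variable [IsUltrametricDist K]

section Bounds

variable {χ : AddChar (ZMod N) K} {s : Finset ι} {a : ι → K} {b : ι → ZMod N} {x : ι → ℤ} {R : ℕ}

lemma norm_expSum_le_one (ha : ∀ i, ‖a i‖ ≤ 1) (τ : ZMod N) : ‖expSum χ s a b τ‖ ≤ 1 :=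
  IsUltrametricDist.norm_sum_le_of_forall_le_of_nonneg zero_le_one fun i _ => by
    rw [norm_mul, AddChar.norm_apply, mul_one]
    exact ha i

lemma gaussNorm_linePolynomial_le_one (ha : ∀ i, ‖a i‖ ≤ 1) (σ : ZMod N) :
    (linePolynomial χ s a b x R σ).gaussNorm (NormedField.toAbsoluteValue K) 1 ≤ 1 := by
  obtain ⟨m, hm⟩ := Polynomial.exists_eq_gaussNorm (NormedField.toAbsoluteValue K) 1
    (linePolynomial χ s a b x R σ)
  rw [hm, one_pow, mul_one, linePolynomial, Polynomial.finsetSum_coeff]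
  change ‖_‖ ≤ (1 : ℝ)
  refine IsUltrametricDist.norm_sum_le_of_forall_le_of_nonneg zero_le_one fun i _ => ?_
  rw [Polynomial.coeff_monomial]
  split_ifs
  · rw [norm_mul, AddChar.norm_apply, mul_one]
    exact ha i
  · rw [norm_zero]
    exact zero_le_one

end Bounds

section StepInequality

variable [IsAlgClosed K] {p : ℕ} [Fact p.Prime] {χ : AddChar (ZMod N) K}
  {s : Finset ι} {a : ι → K} {b : ι → ZMod N} {u : ZMod N} {x : ι → ℤ} {R : ℕ} {c : ℝ}

lemma sum_log_norm_expSum_filter_sub_line_le (hpK : ‖(p : K)‖ = (p : ℝ)⁻¹)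
    (hχ : Function.Injective χ) (ha : ∀ i, ‖a i‖ ≤ 1) (hx : ∀ i, (x i : ZMod N) = u * b i)
    (hR : ∀ i, (x i).natAbs ≤ R) (hc : 0 < c) (hc1 : c ≤ 1) {σ : ZMod N} {S : Finset (ZMod N)}
    (hV : ∀ k ∈ S, c ≤ ‖expSum χ s a b (σ + u * k)‖) (i₀ : ι)
    (hV' : ∀ k ∈ S, expSum χ {i ∈ s | x i = x i₀} a b (σ + u * k) ≠ 0) :
    ∑ k ∈ S, (Real.log ‖expSum χ {i ∈ s | x i = x i₀} a b (σ + u * k)‖ -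
      Real.log ‖expSum χ s a b (σ + u * k)‖) ≤
      2 * R * (Real.log (1 / c) + Real.log N) := by
  set f := linePolynomial χ s a b x R σ with hf
  have heval : ∀ k, ‖f.eval (χ k)‖ = ‖expSum χ s a b (σ + u * k)‖ := fun k => by
    rw [hf, eval_linePolynomial hx hR, norm_mul, AddChar.norm_apply, one_mul]
  have hcoeff : ∀ k ∈ S, Real.log ‖expSum χ {i ∈ s | x i = x i₀} a b (σ + u * k)‖ ≤
      Real.log (f.gaussNorm (NormedField.toAbsoluteValue K) 1) := fun k hk => by
    refine Real.log_le_log (norm_pos_iff.2 (hV' k hk)) ?_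
    rw [expSum_filter_add_mul hx, norm_mul, AddChar.norm_apply, one_mul,
      ← coeff_linePolynomial hR, ← hf]
    have hle := f.le_gaussNorm (NormedField.toAbsoluteValue K) zero_le_one (x i₀ + R).toNat
    rwa [one_pow, mul_one] at hle
  have hroots : S.map ⟨χ, hχ⟩ ⊆ Polynomial.nthRootsFinset N (1 : K) := fun y hy => by
    obtain ⟨k, -, rfl⟩ := Finset.mem_map.1 hy
    exact apply_mem_nthRootsFinset χ k
  have hmean := sum_log_gaussNorm_sub_log_norm_eval_le (f := f) hpK (NeZero.pos N)
    (isPrimitiveRoot_apply_one_of_injective hχ) hroots hc hc1 fun y hy => by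
      obtain ⟨k, hk, rfl⟩ := Finset.mem_map.1 hy
      exact (mul_le_of_le_one_right hc.le (gaussNorm_linePolynomial_le_one ha σ)).trans
        ((hV k hk).trans_eq (heval k).symm)
  rw [Finset.sum_map] at hmean
  have hlog : 0 ≤ Real.log (1 / c) + Real.log N :=
    add_nonneg (Real.log_nonneg ((one_le_div hc).2 hc1)) (Real.log_natCast_nonneg N)
  calc _ ≤ ∑ k ∈ S, (Real.log (f.gaussNorm (NormedField.toAbsoluteValue K) 1) -
          Real.log ‖f.eval (χ k)‖) :=
        Finset.sum_le_sum fun k hk => by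
          rw [heval]
          exact sub_le_sub_right (hcoeff k hk) _
    _ ≤ f.natDegree * (Real.log (1 / c) + Real.log N) := hmean
    _ ≤ 2 * R * (Real.log (1 / c) + Real.log N) :=
        mul_le_mul_of_nonneg_right (by exact_mod_cast natDegree_linePolynomial_le hR σ) hlog

lemma logDefect_le_logDefect_filter_add (hpK : ‖(p : K)‖ = (p : ℝ)⁻¹)
    (hχ : Function.Injective χ) (ha : ∀ i, ‖a i‖ ≤ 1) (hx : ∀ i, (x i : ZMod N) = u * b i)
    (hR : ∀ i, (x i).natAbs ≤ R) (hc : 0 < c) (hc1 : c ≤ 1)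
    (hV : ∀ τ : (ZMod N)ˣ, c ≤ ‖expSum χ s a b τ‖) (i₀ : ι)
    (hV' : ∀ τ : (ZMod N)ˣ, expSum χ {i ∈ s | x i = x i₀} a b τ ≠ 0) :
    logDefect χ s a b ≤ logDefect χ {i ∈ s | x i = x i₀} a b +
      2 * R * (Real.log (1 / c) + Real.log N) / N.totient := by
  classical
  set g : ZMod N → ℝ := fun τ => Real.log ‖expSum χ {i ∈ s | x i = x i₀} a b τ‖ -
    Real.log ‖expSum χ s a b τ‖ with hg
  have hline : ∀ σ, ∑ k with IsUnit (σ + u * k), g (σ + u * k) ≤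
      2 * R * (Real.log (1 / c) + Real.log N) := fun σ =>
    sum_log_norm_expSum_filter_sub_line_le hpK hχ ha hx hR hc hc1
      (fun k hk => by
        obtain ⟨τ, hτ⟩ := (Finset.mem_filter.1 hk).2
        exact hτ ▸ hV τ) i₀
      (fun k hk => by
        obtain ⟨τ, hτ⟩ := (Finset.mem_filter.1 hk).2
        exact hτ ▸ hV' τ)
  have hunits : ∑ τ with IsUnit τ, g τ = ∑ τ : (ZMod N)ˣ, g τ := by
    have hmap : (Finset.univ.filter fun τ : ZMod N => IsUnit τ) =
        Finset.univ.map ⟨Units.val, Units.val_injective⟩ := by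
      ext τ
      simp only [Finset.mem_filter_univ, Finset.mem_map, Finset.mem_univ, true_and]
      rfl
    rw [hmap, Finset.sum_map]
    rfl
  have hsum : ∑ τ : (ZMod N)ˣ, g τ ≤ 2 * R * (Real.log (1 / c) + Real.log N) := by
    have hle := Finset.sum_le_card_nsmul Finset.univ _ _ fun σ _ => hline σ
    rw [sum_sum_filter_add_eq_card_nsmul IsUnit (u * ·), Finset.card_univ, hunits] at hle
    exact le_of_nsmul_le_nsmul_right Fintype.card_ne_zero hle
  rw [hg, Finset.sum_sub_distrib] at hsum
  rw [logDefect, logDefect, ← add_div, Finset.sum_neg_distrib, Finset.sum_neg_distrib]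
  gcongr
  linarith

end StepInequality

end ExponentialSums

section PowerSaving

variable {K ι : Type*} {N : ℕ}

/-- The frequencies `b i`, `i ∈ s`, have pairwise differences of order at least `B`. This plays the
role of the lower bound on `δ(ζ)` for exponential sums. -/
def AreSeparated {G : Type*} [AddGroup G] (B : ℝ) (s : Finset ι) (b : ι → G) : Prop :=
  (s : Set ι).Pairwise fun i j => B ≤ addOrderOf (b i - b j)

lemma AreSeparated.mono {G : Type*} [AddGroup G] {B B' : ℝ} {s s' : Finset ι} {b : ι → G}
    (h : AreSeparated B s b) (hB : B' ≤ B) (hs : s' ⊆ s) : AreSeparated B' s' b :=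
  fun _ hi _ hj hij => hB.trans (h (hs hi) (hs hj) hij)

lemma exists_injective_forall_eq_sub [NeZero N] (s : Finset ι) (b : ι → ZMod N) (i₀ : ι) :
    ∃ M : ℕ, M ∣ N ∧ ∃ (j : ZMod M →+ ZMod N) (b₀ : ι → ZMod M), Function.Injective j ∧
      (∀ i ∈ s, j (b₀ i) = b i - b i₀) ∧ ∀ u, (∀ i ∈ s, u * b₀ i = 0) → u = 0 := by
  set H := AddSubgroup.closure ((fun i => b i - b i₀) '' s)
  set e := zmodAddCyclicAddEquiv (inferInstance : IsAddCyclic H)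
  set j : ZMod (Nat.card H) →+ ZMod N := H.subtype.comp e.toAddMonoidHom with hj
  have hlift : ∀ i, ∃ z, i ∈ s → j z = b i - b i₀ := fun i => by
    by_cases hi : i ∈ s
    · refine ⟨e.symm ⟨_, AddSubgroup.subset_closure ⟨i, hi, rfl⟩⟩, fun _ => ?_⟩
      simp [hj]
    · exact ⟨0, fun h => absurd h hi⟩
  choose b₀ hb₀ using hlift
  have hinj : Function.Injective j := Subtype.val_injective.comp e.injective
  refine ⟨Nat.card H, ?_, j, b₀, hinj, hb₀, fun u hu => ?_⟩
  · simpa [Nat.card_eq_fintype_card, ZMod.card] using H.card_addSubgroup_dvd_card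
  have hle : H ≤ (AddMonoidHom.mulLeft u).ker.map j := by
    refine (AddSubgroup.closure_le _).2 ?_
    rintro _ ⟨i, hi, rfl⟩
    exact ⟨b₀ i, hu i hi, hb₀ i hi⟩
  obtain ⟨z, hz, hz1⟩ := hle (e 1).2
  obtain rfl : z = 1 := hinj hz1
  simpa using hz

variable [NormedField K]

lemma norm_expSum_eq_norm_expSum_of_map_eq_sub {M : ℕ} [NeZero N] (h : M ∣ N)
    (χ : AddChar (ZMod N) K) (j : ZMod M →+ ZMod N) {s : Finset ι} (a : ι → K) {b : ι → ZMod N}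
    {b₀ : ι → ZMod M} {β : ZMod N} (hb : ∀ i ∈ s, j (b₀ i) = b i - β) (τ : ZMod N) :
    ‖expSum χ s a b τ‖ =
      ‖expSum (χ.compAddMonoidHom j) s a b₀ (ZMod.castHom h (ZMod M) τ)‖ := by
  rw [expSum_eq_mul_expSum_sub_const χ s a b β, norm_mul, AddChar.norm_apply, one_mul,
    expSum_compAddMonoidHom, expSum_congr hb]

/-- Equidistribution with exponent `κ` for the exponential sums with coefficients `a` supported on
`s`; the constant `C` is both the threshold and the implied constant. -/
def HasPowerSaving (a : ι → K) (κ : ℝ) (s : Finset ι) (C : ℝ) : Prop :=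
  ∀ (N : ℕ) [NeZero N] (χ : AddChar (ZMod N) K), Function.Injective χ →
    ∀ (b : ι → ZMod N) (B : ℝ), C ≤ B → AreSeparated B s b →
      (∀ τ : (ZMod N)ˣ, expSum χ s a b τ ≠ 0) ∧ logDefect χ s a b ≤ C * B ^ (-κ)

lemma hasPowerSaving_singleton {a : ι → K} (κ : ℝ) {i₀ : ι} (ha : ‖a i₀‖ = 1) {C : ℝ}
    (hC : 0 ≤ C) : HasPowerSaving a κ {i₀} C := by
  intro N _ χ _ b B hCB _
  have hnorm : ∀ τ, ‖expSum χ {i₀} a b τ‖ = 1 := fun τ => by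
    rw [expSum, Finset.sum_singleton, norm_mul, AddChar.norm_apply, ha, one_mul]
  refine ⟨fun τ => norm_ne_zero_iff.1 (by rw [hnorm]; exact one_ne_zero), ?_⟩
  simp only [logDefect, hnorm, Real.log_one, neg_zero, Finset.sum_const_zero, zero_div]
  exact mul_nonneg hC (Real.rpow_nonneg (hC.trans hCB) _)

/-- It suffices to prove the bound for frequencies that contain `0` and generate `ZMod N`. -/
lemma hasPowerSaving_of_normalized {a : ι → K} {κ C : ℝ} {s : Finset ι} {i₀ j₀ : ι} (hi₀ : i₀ ∈ s)
    (hj₀ : j₀ ∈ s) (hij : j₀ ≠ i₀)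
    (h : ∀ (N : ℕ) [NeZero N] (χ : AddChar (ZMod N) K), Function.Injective χ →
      ∀ (b : ι → ZMod N) (B : ℝ), C ≤ B → B ≤ N → AreSeparated B s b → b i₀ = 0 →
        (∀ u, (∀ i ∈ s, u * b i = 0) → u = 0) →
        (∀ τ : (ZMod N)ˣ, expSum χ s a b τ ≠ 0) ∧ logDefect χ s a b ≤ C * B ^ (-κ)) :
    HasPowerSaving a κ s C := by
  intro N _ χ hχ b B hCB hsep
  obtain ⟨M, hMN, j, b₀, hj, hb₀, hgen⟩ := exists_injective_forall_eq_sub s b i₀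
  have : NeZero M := ⟨fun h0 => NeZero.ne N (zero_dvd_iff.1 (h0 ▸ hMN))⟩
  have horder : ∀ i ∈ s, ∀ k ∈ s, addOrderOf (b₀ i - b₀ k) = addOrderOf (b i - b k) :=
    fun i hi k hk => by
      rw [← addOrderOf_injective j hj, map_sub, hb₀ i hi, hb₀ k hk, sub_sub_sub_cancel_right]
  have hsep₀ : AreSeparated B s b₀ := fun i hi k hk hik => by
    simpa only [horder i hi k hk] using hsep hi hk hik
  have hBM : B ≤ M := (hsep₀ hj₀ hi₀ hij).trans <| by
    exact_mod_cast addOrderOf_le_card_univ.trans_eq (ZMod.card M)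
  have hb₀0 : b₀ i₀ = 0 := hj (by rw [hb₀ i₀ hi₀, sub_self, map_zero])
  have hnorm := norm_expSum_eq_norm_expSum_of_map_eq_sub hMN χ j a hb₀
  obtain ⟨hne, hle⟩ := h M (χ.compAddMonoidHom j) (hχ.comp hj) b₀ B hCB hBM hsep₀ hb₀0 hgen
  refine ⟨fun τ => ?_, (logDefect_eq_of_norm_eq hMN hnorm).trans_le hle⟩
  rw [← norm_ne_zero_iff, hnorm, norm_ne_zero_iff]
  exact hne (ZMod.unitsMap hMN τ)

variable [IsUltrametricDist K] [IsAlgClosed K] {p : ℕ} [Fact p.Prime]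

/-- The lines along which `s` becomes a polynomial of small degree are found by Dirichlet's
approximation argument; `s'` collects the frequencies that agree with `b i₀` along them. -/
lemma exists_ssubset_logDefect_le [Fintype ι] [NeZero N] (hpK : ‖(p : K)‖ = (p : ℝ)⁻¹)
    {χ : AddChar (ZMod N) K} (hχ : Function.Injective χ) {s : Finset ι} {a : ι → K} {i₀ : ι}
    (ha : ∀ i, ‖a i‖ ≤ 1) {b : ι → ZMod N} (hi₀ : i₀ ∈ s) (hb : b i₀ = 0)
    (hgen : ∀ u, (∀ i ∈ s, u * b i = 0) → u = 0)
    {c : ℝ} (hc : 0 < c) (hc1 : c ≤ 1) (hV : ∀ τ : (ZMod N)ˣ, c ≤ ‖expSum χ s a b τ‖)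
    {H : ℕ} (hH : 0 < H) (hHN : H ^ Fintype.card ι < N) :
    ∃ s' ⊂ s, i₀ ∈ s' ∧ ((∀ τ : (ZMod N)ˣ, expSum χ s' a b τ ≠ 0) →
      logDefect χ s a b ≤ logDefect χ s' a b +
        2 * (N / H) * (Real.log (1 / c) + Real.log N) / N.totient) := by
  classical
  obtain ⟨u, x, hu, hx, hxH⟩ := exists_ne_zero_forall_intCast_eq_mul hH hHN b
  refine ⟨{i ∈ s | x i = x i₀}, Finset.filter_ssubset.2 ?_, by simp [hi₀], fun hV' => ?_⟩
  · by_contra! hall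
    refine hu (hgen u fun i hi => ?_)
    rw [← hx, hall i hi, hx, hb, mul_zero]
  have hlog : 0 ≤ Real.log (1 / c) + Real.log N :=
    add_nonneg (Real.log_nonneg ((one_le_div hc).2 hc1)) (Real.log_natCast_nonneg N)
  refine (logDefect_le_logDefect_filter_add hpK hχ ha hx
    (fun i => (Nat.le_div_iff_mul_le hH).2 (hxH i)) hc hc1 hV i₀ hV').trans ?_
  gcongr
  exact Nat.cast_div_le

variable [CharZero K]

lemma exists_forall_le_norm_expSum (hpK : ‖(p : K)‖ < 1) {s : Finset ι} {a : ι → K} {i₀ : ι}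
    (hi₀ : i₀ ∈ s) (ha : a i₀ ≠ 0) :
    ∃ c : ℝ, 0 < c ∧ c ≤ 1 ∧ ∃ B : ℝ, ∀ (N : ℕ) [NeZero N] (χ : AddChar (ZMod N) K),
      Function.Injective χ → ∀ b : ι → ZMod N, AreSeparated B s b →
        ∀ τ : (ZMod N)ˣ, c ≤ ‖expSum χ s a b τ‖ := by
  obtain ⟨c, hc, B, hB, hgap⟩ := exists_forall_norm_sum_mul_lt_imp_pow_eq_pow hpK
    (a := fun i : s => a i) (j := ⟨i₀, hi₀⟩) ha
  refine ⟨min c 1, lt_min hc one_pos, min_le_right _ _, B + 1, fun N _ χ hχ b hsep τ => ?_⟩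
  by_contra! hlt
  have hsum : ‖∑ i : s, a i * χ (b i * τ)‖ < c := by
    rw [Finset.sum_coe_sort s fun i => a i * χ (b i * τ)]
    exact hlt.trans_le (min_le_left _ _)
  obtain ⟨i, k, hik, heq⟩ := hgap (fun i => χ (b i * τ)) (fun i =>
    χ.toMonoidHom.isOfFinOrder (isOfFinOrder_of_finite (Multiplicative.ofAdd (b i * τ)))) hsum
  have hB0 : B • (b i - b k) = 0 := by
    rw [← AddChar.map_nsmul_eq_pow, ← AddChar.map_nsmul_eq_pow] at heq
    refine τ.mul_left_eq_zero.1 ?_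
    rw [smul_mul_assoc, sub_mul, smul_sub, hχ heq, sub_self]
  have hle : (addOrderOf (b i - b k : ZMod N) : ℝ) ≤ B :=
    Nat.cast_le.2 (addOrderOf_le_of_nsmul_eq_zero hB hB0)
  linarith [hsep i.2 k.2 (Subtype.coe_injective.ne hik)]

open Filter in
theorem eventually_hasPowerSaving [Fintype ι] {a : ι → K} {i₀ : ι} (hpK : ‖(p : K)‖ = (p : ℝ)⁻¹)
    (ha : ∀ i, ‖a i‖ ≤ 1) (ha₀ : ‖a i₀‖ = 1) (s : Finset ι) (hi₀ : i₀ ∈ s) :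
    ∀ᶠ C in atTop, HasPowerSaving a (1 / (4 * Fintype.card ι)) s C := by
  have hp : ‖(p : K)‖ < 1 := hpK.trans_lt
    (inv_lt_one_of_one_lt₀ (Nat.one_lt_cast.2 (Fact.out : p.Prime).one_lt))
  have hcard : 0 < Fintype.card ι := Fintype.card_pos_iff.2 ⟨i₀⟩
  have hκ : (0 : ℝ) ≤ 1 / (4 * Fintype.card ι) := by positivity
  induction s using Finset.strongInduction with | H s ih => ?_
  rcases (Finset.singleton_subset_iff.2 hi₀).eq_or_ssubset with rfl | hss
  · exact (eventually_ge_atTop 0).mono fun C hC => hasPowerSaving_singleton _ ha₀ hC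
  obtain ⟨j₀, hj₀, hij⟩ := Finset.exists_of_ssubset hss
  rw [Finset.mem_singleton] at hij
  obtain ⟨c, hc, hc1, B₀, hlow⟩ := exists_forall_le_norm_expSum hp hi₀
    (norm_ne_zero_iff.1 (ha₀.trans_ne one_ne_zero))
  obtain ⟨N₀, hN₀⟩ := eventually_atTop.1 (eventually_exists_pow_lt_and_le_totient_mul_rpow hcard
    (Real.log_nonneg ((one_le_div hc).2 hc1)))
  have hproper : ∀ᶠ C in atTop, ∀ s', s' ⊂ s → i₀ ∈ s' →
      HasPowerSaving a (1 / (4 * Fintype.card ι)) s' (C - 1) :=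
    eventually_all.2 fun s' => by
      by_cases h : s' ⊂ s ∧ i₀ ∈ s'
      · exact ((tendsto_atTop_add_const_right atTop (-1 : ℝ) tendsto_id).eventually
          (ih s' h.1 h.2)).mono fun C hC _ _ => hC
      · exact Eventually.of_forall fun C h1 h2 => absurd ⟨h1, h2⟩ h
  filter_upwards [hproper, eventually_ge_atTop B₀, eventually_ge_atTop (N₀ : ℝ),
    eventually_ge_atTop 1] with C hC hCB₀ hCN₀ hC1
  refine hasPowerSaving_of_normalized hi₀ hj₀ hij fun N _ χ hχ b B hCB hBN hsep hb hgen => ?_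
  have hV := hlow N χ hχ b (hsep.mono (hCB₀.trans hCB) subset_rfl)
  refine ⟨fun τ => norm_pos_iff.1 (hc.trans_le (hV τ)), ?_⟩
  obtain ⟨H, hH, hHN, hbound⟩ := hN₀ N (Nat.cast_le.1 (hCN₀.trans (hCB.trans hBN)))
  obtain ⟨s', hs', hi₀', hstep⟩ :=
    exists_ssubset_logDefect_le hpK hχ ha hi₀ hb hgen hc hc1 hV hH hHN
  obtain ⟨hne, hdefect⟩ := hC s' hs' hi₀' N χ hχ b B (by linarith) (hsep.mono le_rfl hs'.subset)
  have hφ : (0 : ℝ) < N.totient := Nat.cast_pos.2 (Nat.totient_pos.2 (NeZero.pos N))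
  have hpow : (N : ℝ) ^ (-(1 / (4 * Fintype.card ι) : ℝ)) ≤ B ^ (-(1 / (4 * Fintype.card ι) : ℝ)) :=
    Real.rpow_le_rpow_of_nonpos (by linarith) hBN (neg_nonpos.2 hκ)
  have herror := (div_le_iff₀' hφ).2 hbound
  linarith [hstep hne]

end PowerSaving

section TorsionPoints

variable {K : Type*} {n N : ℕ}

lemma exists_mem_support_mvGaussNorm_eq [NontriviallyNormedField K] {F : MvPolynomial (Fin n) K}
    (hF : F ≠ 0) : ∃ d ∈ F.support, mvGaussNorm F = ‖F.coeff d‖ := by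
  obtain ⟨d, hd, h⟩ := Finset.exists_mem_eq_sup F.support (MvPolynomial.support_nonempty.2 hF)
    fun d => ‖F.coeff d‖₊
  exact ⟨d, hd, congrArg NNReal.toReal h⟩

lemma norm_coeff_le_mvGaussNorm [NontriviallyNormedField K] {F : MvPolynomial (Fin n) K}
    {d : Fin n →₀ ℕ} (hd : d ∈ F.support) : ‖F.coeff d‖ ≤ mvGaussNorm F :=
  NNReal.coe_le_coe.2 (Finset.le_sup (f := fun d => ‖F.coeff d‖₊) hd)

lemma charZero_of_norm_natCast_eq_inv [NormedField K] [IsUltrametricDist K] {p : ℕ}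
    [Fact p.Prime] (hpK : ‖(p : K)‖ = (p : ℝ)⁻¹) : CharZero K :=
  charZero_of_inj_zero fun N hN => by
    by_contra hN0
    have h := inv_natCast_le_norm_natCast hpK hN0
    rw [hN, norm_zero] at h
    exact (inv_pos.2 (Nat.cast_pos.2 (Nat.pos_of_ne_zero hN0))).not_ge h

variable [Field K]

lemma exists_injective_addChar_forall_apply_eq [IsAlgClosed K] [CharZero K] [NeZero N] {ι : Type*}
    {ζ : ι → Kˣ} (hζ : ζ ^ N = 1) :
    ∃ χ : AddChar (ZMod N) K, Function.Injective χ ∧ ∃ e : ι → ZMod N, ∀ i, χ (e i) = ζ i := by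
  have : NeZero (N : K) := ⟨Nat.cast_ne_zero.2 (NeZero.ne N)⟩
  obtain ⟨ω, hω⟩ := HasEnoughRootsOfUnity.exists_primitiveRoot K N
  have hζN : ∀ i, (ζ i : K) ^ N = 1 := fun i => by
    rw [← Units.val_pow_eq_pow_val, ← Pi.pow_apply, hζ, Pi.one_apply, Units.val_one]
  choose e _ he using fun i => hω.eq_pow_of_pow_eq_one (hζN i)
  refine ⟨AddChar.zmodChar N hω.pow_eq_one, fun x y hxy => ?_, fun i => e i, fun i => ?_⟩
  · rw [AddChar.zmodChar_apply, AddChar.zmodChar_apply] at hxy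
    exact ZMod.val_injective N (hω.pow_inj x.val_lt y.val_lt hxy)
  · rw [AddChar.zmodChar_apply', he]

lemma addChar_sum {G ι : Type*} [AddCommMonoid G] (χ : AddChar G K) (s : Finset ι) (f : ι → G) :
    χ (∑ i ∈ s, f i) = ∏ i ∈ s, χ (f i) :=
  map_prod χ.toMonoidHom (fun i => Multiplicative.ofAdd (f i)) s

variable {χ : AddChar (ZMod N) K} {ζ : Fin n → Kˣ} {e : Fin n → ZMod N}

lemma eval_pow_eq_mul_expSum [NeZero N] (he : ∀ i, χ (e i) = ζ i) (F : MvPolynomial (Fin n) K)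
    {A : K} (hA : A ≠ 0) (σ : ZMod N) :
    MvPolynomial.eval (fun i => ((ζ i ^ σ.val : Kˣ) : K)) F =
      A * expSum χ Finset.univ (fun d : F.support => F.coeff d / A)
        (fun d => ∑ i, d.1 i • e i) σ := by
  have hmonomial : ∀ d : Fin n →₀ ℕ,
      χ ((∑ i, d i • e i) * σ) = ∏ i, ((ζ i ^ σ.val : Kˣ) : K) ^ d i := fun d => by
    rw [Finset.sum_mul, addChar_sum]
    refine Finset.prod_congr rfl fun i _ => ?_
    rw [smul_mul_assoc, AddChar.map_nsmul_eq_pow, ← ZMod.natCast_zmod_val σ, mul_comm,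
      ← nsmul_eq_mul, AddChar.map_nsmul_eq_pow, he, Units.val_pow_eq_pow_val,
      ZMod.natCast_zmod_val]
  rw [MvPolynomial.eval_eq', expSum, Finset.mul_sum, ← Finset.sum_coe_sort F.support]
  refine Finset.sum_congr rfl fun d _ => ?_
  rw [hmonomial, ← mul_assoc, mul_div_cancel₀ _ hA]

lemma deltaNat_le {a : Fin n → ℤ} (ha : a ≠ 0) (h : ∏ i, ζ i ^ a i = 1) {m : ℕ}
    (hm : ∀ i, (a i).natAbs ≤ m) : deltaNat ζ ≤ m :=
  le_trans (Nat.sInf_le ⟨a, ha, h, rfl⟩) (Finset.sup_le fun i _ => hm i)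

lemma deltaNat_le_addOrderOf_mul [NeZero N] (he : ∀ i, χ (e i) = ζ i) {d d' : Fin n →₀ ℕ}
    (hdd' : d ≠ d') {m : ℕ} (hd : ∀ i, d i ≤ m) (hd' : ∀ i, d' i ≤ m) :
    deltaNat ζ ≤ addOrderOf (∑ i, d i • e i - ∑ i, d' i • e i) * m := by
  set u := addOrderOf (∑ i, d i • e i - ∑ i, d' i • e i)
  have hu0 : u ≠ 0 := (addOrderOf_pos _).ne'
  refine deltaNat_le (a := fun i => u * (d i - d' i)) (fun h => ?_) ?_ fun i => ?_
  · obtain ⟨i, hi⟩ := Finsupp.ne_iff.1 hdd'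
    have := congrFun h i
    simp only [Pi.zero_apply, mul_eq_zero, Nat.cast_eq_zero, hu0, false_or] at this
    omega
  · refine Units.ext ?_
    have hzero : ∑ i, ((u : ℤ) * (d i - d' i)) • e i = 0 := by
      simp only [mul_smul, sub_smul, natCast_zsmul, ← Finset.smul_sum, Finset.sum_sub_distrib]
      exact addOrderOf_nsmul_eq_zero _
    rw [Units.coe_prod, Units.val_one, ← χ.map_zero_eq_one, ← hzero, addChar_sum]
    refine Finset.prod_congr rfl fun i _ => ?_
    rw [AddChar.map_zsmul_eq_zpow, he, Units.val_zpow_eq_zpow_val]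
  · rw [Int.natAbs_mul, Int.natAbs_natCast]
    have := hd i
    have := hd' i
    exact Nat.mul_le_mul_left u (by omega)

lemma areSeparated_deltaNat_div [NeZero N] (he : ∀ i, χ (e i) = ζ i) (F : MvPolynomial (Fin n) K)
    (s : Finset F.support) :
    AreSeparated (deltaNat ζ / (F.totalDegree + 1)) s fun d : F.support => ∑ i, d.1 i • e i := by
  have hdeg : ∀ d ∈ F.support, ∀ i, d i ≤ F.totalDegree + 1 := fun d hd i =>
    (Finsupp.le_degree i d).trans ((MvPolynomial.le_totalDegree hd).trans (Nat.le_succ _))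
  intro d _ d' _ hdd'
  rw [div_le_iff₀ (by positivity)]
  exact_mod_cast deltaNat_le_addOrderOf_mul he (Subtype.coe_injective.ne hdd') (hdeg d d.2)
    (hdeg d' d'.2)

end TorsionPoints

section Equidistribution

lemma abs_mean_log_norm_mul_sub {K ι : Type*} [NormedField K] [IsUltrametricDist K] {N : ℕ}
    [NeZero N] {χ : AddChar (ZMod N) K} {s : Finset ι} {a : ι → K} (ha : ∀ i, ‖a i‖ ≤ 1)
    {b : ι → ZMod N} (h : ∀ τ : (ZMod N)ˣ, expSum χ s a b τ ≠ 0) {A : K} (hA : A ≠ 0) :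
    |1 / (Fintype.card (ZMod N)ˣ : ℝ) * ∑ τ : (ZMod N)ˣ, Real.log ‖A * expSum χ s a b τ‖
      - Real.log ‖A‖| = logDefect χ s a b := by
  have hφ : (0 : ℝ) < N.totient := Nat.cast_pos.2 (Nat.totient_pos.2 (NeZero.pos N))
  have hdefect : 0 ≤ logDefect χ s a b := div_nonneg (Finset.sum_nonneg fun τ _ =>
    neg_nonneg.2 (Real.log_nonpos (norm_nonneg _) (norm_expSum_le_one ha _))) hφ.le
  have hlog : ∀ τ : (ZMod N)ˣ, Real.log ‖A * expSum χ s a b τ‖ =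
      Real.log ‖A‖ + Real.log ‖expSum χ s a b τ‖ := fun τ => by
    rw [norm_mul, Real.log_mul (norm_ne_zero_iff.2 hA) (norm_ne_zero_iff.2 (h τ))]
  rw [← abs_of_nonneg hdefect, ← abs_neg, logDefect]
  congr 1
  simp only [hlog, Finset.sum_add_distrib, Finset.sum_const, Finset.card_univ, nsmul_eq_mul,
    ZMod.card_units_eq_totient, Finset.sum_neg_distrib]
  field_simp
  ring

theorem stmt18_general {p : ℕ} (hp : p.Prime)
    {K : Type*} [NontriviallyNormedField K] [IsUltrametricDist K] [IsAlgClosed K]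
    (hpnorm : ‖(p : K)‖ = (p : ℝ)⁻¹) {n : ℕ} (F : MvPolynomial (Fin n) K) (hF : F ≠ 0) :
    ∃ C D : ℝ, ∀ (N : ℕ) [NeZero N] (ζ : Fin n → Kˣ), ζ ^ N = 1 → C ≤ deltaNat ζ →
      (∀ σ : (ZMod N)ˣ,
          MvPolynomial.eval (fun i => ((ζ i ^ ((σ : ZMod N).val) : Kˣ) : K)) F ≠ 0) ∧
        |(1 / (Fintype.card (ZMod N)ˣ : ℝ)) *
            ∑ σ : (ZMod N)ˣ, Real.log
              ‖MvPolynomial.eval (fun i => ((ζ i ^ ((σ : ZMod N).val) : Kˣ) : K)) F‖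
          - Real.log (mvGaussNorm F)|
        ≤ D * (deltaNat ζ : ℝ) ^ (-(1 / (4 * F.support.card)) : ℝ) := by
  have := Fact.mk hp
  have := charZero_of_norm_natCast_eq_inv hpnorm
  obtain ⟨d₀, hd₀, hnorm⟩ := exists_mem_support_mvGaussNorm_eq hF
  set A := F.coeff d₀
  have hA : A ≠ 0 := MvPolynomial.mem_support_iff.1 hd₀
  have ha : ∀ d : F.support, ‖F.coeff d / A‖ ≤ 1 := fun d => by
    rw [norm_div, ← hnorm]
    exact div_le_one_of_le₀ (norm_coeff_le_mvGaussNorm d.2) (NNReal.coe_nonneg _)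
  obtain ⟨C, hsaving⟩ := (eventually_hasPowerSaving (i₀ := ⟨d₀, hd₀⟩) hpnorm ha
    (by rw [div_self hA, norm_one]) Finset.univ (Finset.mem_univ _)).exists
  set M : ℝ := F.totalDegree + 1
  have hM : 0 < M := by positivity
  refine ⟨C * M, C * M ^ (1 / (4 * F.support.card) : ℝ), fun N _ ζ hζ hδ => ?_⟩
  obtain ⟨χ, hχ, e, he⟩ := exists_injective_addChar_forall_apply_eq hζ
  obtain ⟨hne, hle⟩ := hsaving N χ hχ _ _ ((le_div_iff₀ hM).2 hδ) (areSeparated_deltaNat_div he F _)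
  simp only [eval_pow_eq_mul_expSum he F hA, hnorm]
  refine ⟨fun σ => mul_ne_zero hA (hne σ), ?_⟩
  rw [abs_mean_log_norm_mul_sub ha hne hA]
  rwa [Fintype.card_coe, Real.div_rpow (Nat.cast_nonneg _) hM.le, Real.rpow_neg hM.le,
    div_inv_eq_mul, ← mul_assoc, mul_right_comm] at hle

end Equidistribution

/-- The `p`-adic equidistribution theorem: for every nonzero
`F ∈ ℂ_p[X₁,…,X_n]` there are `κ > 0` and constants `C, D` such that for every
torsion point `ζ ∈ G_m^n(ℂ_p)` of order `N` with `δ(ζ) ≥ C` one has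
`F(σ(ζ)) ≠ 0` for every `σ ∈ Gal(ℚ(ζ)/ℚ) ≅ (ZMod N)ˣ` and
`|(1/[ℚ(ζ):ℚ])·Σ_σ log|F(σ(ζ))|_p − log|F|_p| ≤ D·δ(ζ)^{-κ}`. -/
theorem stmt18 {p : ℕ} (hp : p.Prime)
    {K : Type*} [NontriviallyNormedField K] [IsUltrametricDist K] [IsAlgClosed K]
    [CompleteSpace K] (hpnorm : ‖(p : K)‖ = (p : ℝ)⁻¹)
    {n : ℕ} (F : MvPolynomial (Fin n) K) (hF : F ≠ 0) :
    ∃ κ : ℝ, 0 < κ ∧ ∃ C D : ℝ, ∀ N : ℕ, ∀ hN : 0 < N, ∀ ζ : Fin n → Kˣ,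
      orderOf ζ = N → C ≤ (deltaNat ζ : ℝ) →
      haveI : NeZero N := ⟨hN.ne'⟩
      (∀ σ : (ZMod N)ˣ,
          MvPolynomial.eval (fun i => ((ζ i ^ ((σ : ZMod N).val) : Kˣ) : K)) F ≠ 0) ∧
        |(1 / (Fintype.card (ZMod N)ˣ : ℝ)) *
            ∑ σ : (ZMod N)ˣ, Real.log
              ‖MvPolynomial.eval (fun i => ((ζ i ^ ((σ : ZMod N).val) : Kˣ) : K)) F‖
          - Real.log (mvGaussNorm F)|
        ≤ D * (deltaNat ζ : ℝ) ^ (-κ) := by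
  obtain ⟨C, D, h⟩ := stmt18_general hp hpnorm F hF
  have hcard : 0 < F.support.card := (MvPolynomial.support_nonempty.2 hF).card_pos
  exact ⟨1 / (4 * F.support.card), by positivity, C, D, fun N hN ζ hζ =>
    have : NeZero N := ⟨hN.ne'⟩; h N ζ (hζ ▸ pow_orderOf_eq_one ζ)⟩
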